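/- arXiv:0903.2566 — 12 statements merged into one kernel-verified Lean document; each statement's English description precedes it below -/
import Mathlib

section
/- Let A be a commutative reduced ring and let x₁,…,xₙ ∈ A. Then every element of A is a convex combination of x₁,…,xₙ (i.e., for every x ∈ A there exists a complete family of orthogonal idempotents a₁,…,aₙ of A with x = a₁x₁ + ⋯ + aₙxₙ) if and only if ∏ᵢ₌₁ⁿ (x − xᵢ) = 0 for every x ∈ A. -/
/-- A complete family of orthogonal idempotents (c.f.o.i.) of a commutative ring. -/
def IsCFOI {A : Type*} [CommRing A] {n : ℕ} (a : Fin n → A) : Prop :=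
  (∀ i, IsIdempotentElem (a i)) ∧ (∀ i j, i ≠ j → a i * a j = 0) ∧ ∑ i, a i = 1

/-!
A c.f.o.i. `a` satisfies `y = ∑ aᵢ xᵢ` exactly when every `aᵢ` annihilates `y - xᵢ`; as the `aᵢ`
sum to `1`, this forces `∏ (y - xᵢ) = 0`.

Conversely, if `∏ᵢ (y - xᵢ)` vanishes for all `y`, then every residue domain `A ⧸ P` consists of
the classes of the `n` elements `xᵢ`, so it is a finite field in which `z ^ (n! + 1) = z`. By
reducedness this identity holds in `A`. Hence `(y - xᵢ) ^ n!` is an idempotent, its complement `eᵢ`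
annihilates `y - xᵢ`, and `∏ (1 - eᵢ) = 0`. Making the `eᵢ` disjoint, by multiplying each with the
complements of the earlier ones, yields the required c.f.o.i.
-/

open Finset

lemma isIdempotentElem_pow_of_pow_add_one_eq_self {M : Type*} [Monoid M] {a : M} {n : ℕ}
    (hn : n ≠ 0) (ha : a ^ (n + 1) = a) : IsIdempotentElem (a ^ n) := by
  obtain ⟨m, rfl⟩ := Nat.exists_eq_add_one_of_ne_zero hn
  calc a ^ (m + 1) * a ^ (m + 1) = a ^ (m + 1 + 1) * a ^ m := by
        rw [← pow_add, ← pow_add]; congr 1; ring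
    _ = a ^ (m + 1) := by rw [ha, pow_succ']

lemma pow_factorial_add_one_eq_self_of_card_le {M : Type*} [MonoidWithZero M] [IsCancelMulZero M]
    [Nontrivial M] [Finite M] {n : ℕ} (hn : Nat.card M ≤ n) (a : M) :
    a ^ (n.factorial + 1) = a := by
  classical
  have := Fintype.ofFinite M
  let _ := Fintype.groupWithZeroOfCancel M
  obtain rfl | ha := eq_or_ne a 0
  · exact zero_pow (Nat.succ_ne_zero _)
  have hcard : 1 < Fintype.card M := Fintype.one_lt_card
  rw [Nat.card_eq_fintype_card] at hn
  obtain ⟨k, hk⟩ : Fintype.card M - 1 ∣ n.factorial := Nat.dvd_factorial (by lia) (by lia)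
  rw [pow_succ, hk, pow_mul, FiniteField.pow_card_sub_one_eq_one a ha, one_pow, one_mul]

lemma eq_of_forall_isPrime_quotient_mk_eq {A : Type*} [CommRing A] [IsReduced A] {a b : A}
    (h : ∀ P : Ideal A, P.IsPrime → Ideal.Quotient.mk P a = Ideal.Quotient.mk P b) : a = b := by
  have hmem : a - b ∈ nilradical A := by
    rw [nilradical_eq_sInf, Ideal.mem_sInf]
    exact fun P hP ↦ Ideal.Quotient.eq.mp (h _ hP)
  exact sub_eq_zero.mp (mem_nilradical.mp hmem).eq_zero

section Family

variable {ι A : Type*} [Fintype ι]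

lemma surjective_of_forall_prod_sub_eq_zero [CommRing A] [IsDomain A] {x : ι → A}
    (hx : ∀ y, ∏ i, (y - x i) = 0) : Function.Surjective x := fun y ↦ by
  obtain ⟨i, -, hi⟩ := prod_eq_zero_iff.mp (hx y)
  exact ⟨i, (sub_eq_zero.mp hi).symm⟩

lemma pow_factorial_card_add_one_eq_self_of_forall_prod_sub_eq_zero [CommRing A] [IsReduced A]
    {x : ι → A} (hx : ∀ y, ∏ i, (y - x i) = 0) (y : A) :
    y ^ ((Fintype.card ι).factorial + 1) = y := by
  refine eq_of_forall_isPrime_quotient_mk_eq fun P _ ↦ ?_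
  have hsurj : Function.Surjective fun i ↦ Ideal.Quotient.mk P (x i) := by
    refine surjective_of_forall_prod_sub_eq_zero (Ideal.Quotient.mk_surjective.forall.mpr ?_)
    intro z
    simpa only [map_prod, map_sub, map_zero] using congrArg (Ideal.Quotient.mk P) (hx z)
  have := Finite.of_surjective _ hsurj
  have hcard : Nat.card (A ⧸ P) ≤ Fintype.card ι := by
    simpa only [Nat.card_eq_fintype_card] using Nat.card_le_card_of_surjective _ hsurj
  rw [map_pow, pow_factorial_add_one_eq_self_of_card_le hcard]

lemma eq_sum_mul_iff_forall_mul_sub_eq_zero [Ring A] {a : ι → A}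
    (ha : CompleteOrthogonalIdempotents a) {x : ι → A} {y : A} :
    y = ∑ i, a i * x i ↔ ∀ i, a i * (y - x i) = 0 := by
  classical
  simp only [mul_sub, sub_eq_zero]
  refine ⟨?_, fun h ↦ ?_⟩
  · rintro rfl i
    simp only [mul_sum, ← mul_assoc, ha.mul_eq, ite_mul, zero_mul, sum_ite_eq, mem_univ, if_true]
  · simp only [← h, ← sum_mul, ha.complete, one_mul]

lemma prod_eq_zero_of_sum_eq_one_of_forall_mul_eq_zero [CommSemiring A] {a b : ι → A}
    (ha : ∑ i, a i = 1) (hab : ∀ i, a i * b i = 0) : ∏ i, b i = 0 := by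
  rw [← one_mul (∏ i, b i), ← ha, sum_mul]
  refine sum_eq_zero fun i hi ↦ ?_
  obtain ⟨c, hc⟩ := dvd_prod_of_mem b hi
  rw [hc, ← mul_assoc, hab, zero_mul]

lemma completeOrthogonalIdempotents_mul_prod_one_sub [LinearOrder ι] [CommRing A] {e : ι → A}
    (he : ∀ i, IsIdempotentElem (e i)) (hprod : ∏ i, (1 - e i) = 0) :
    CompleteOrthogonalIdempotents fun i ↦ e i * ∏ j with j < i, (1 - e j) := by
  have orthogonal_of_lt {i j : ι} (hij : i < j) :
      (e i * ∏ k with k < i, (1 - e k)) * (e j * ∏ k with k < j, (1 - e k)) = 0 := by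
    obtain ⟨c, hc⟩ : 1 - e i ∣ ∏ k with k < j, (1 - e k) :=
      dvd_prod_of_mem _ (mem_filter.mpr ⟨mem_univ i, hij⟩)
    rw [hc]
    linear_combination (∏ k with k < i, (1 - e k)) * e j * c * (he i).mul_one_sub_self
  refine CompleteOrthogonalIdempotents.iff_ortho_complete.mpr ⟨fun i j hij ↦ ?_, ?_⟩
  · obtain hlt | hgt := hij.lt_or_gt
    · exact orthogonal_of_lt hlt
    · exact (mul_comm _ _).trans (orthogonal_of_lt hgt)
  · exact (sub_eq_zero.mp ((prod_one_sub_ordered univ e).symm.trans hprod)).symm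

lemma exists_completeOrthogonalIdempotents_forall_dvd [CommRing A] {e : ι → A}
    (he : ∀ i, IsIdempotentElem (e i)) (hprod : ∏ i, (1 - e i) = 0) :
    ∃ a : ι → A, CompleteOrthogonalIdempotents a ∧ ∀ i, e i ∣ a i := by
  classical
  let _ : LinearOrder ι := linearOrderOfSTO WellOrderingRel
  exact ⟨_, completeOrthogonalIdempotents_mul_prod_one_sub he hprod, fun i ↦ dvd_mul_right _ _⟩

lemma exists_completeOrthogonalIdempotents_forall_mul_eq_zero [CommRing A] {b : ι → A} {n : ℕ}
    (hn : n ≠ 0) (hpow : ∀ i, b i ^ (n + 1) = b i) (hprod : ∏ i, b i = 0) :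
    ∃ a : ι → A, CompleteOrthogonalIdempotents a ∧ ∀ i, a i * b i = 0 := by
  have he (i : ι) : IsIdempotentElem (1 - b i ^ n) :=
    (isIdempotentElem_pow_of_pow_add_one_eq_self hn (hpow i)).one_sub
  have heprod : ∏ i, (1 - (1 - b i ^ n)) = 0 := by
    simp only [sub_sub_cancel, prod_pow, hprod, zero_pow hn]
  have heb (i : ι) : (1 - b i ^ n) * b i = 0 := by
    rw [sub_mul, one_mul, ← pow_succ, hpow, sub_self]
  obtain ⟨a, ha, hdvd⟩ := exists_completeOrthogonalIdempotents_forall_dvd he heprod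
  exact ⟨a, ha, fun i ↦ zero_dvd_iff.mp (heb i ▸ mul_dvd_mul_right (hdvd i) (b i))⟩

end Family

theorem stmt_0_general {A ι : Type*} [CommRing A] [IsReduced A] [Fintype ι] (x : ι → A) :
    (∀ y : A, ∃ a : ι → A, CompleteOrthogonalIdempotents a ∧ y = ∑ i, a i * x i) ↔
      ∀ y : A, ∏ i, (y - x i) = 0 := by
  refine ⟨fun h y ↦ ?_, fun h y ↦ ?_⟩
  · obtain ⟨a, ha, hy⟩ := h y
    exact prod_eq_zero_of_sum_eq_one_of_forall_mul_eq_zero ha.complete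
      ((eq_sum_mul_iff_forall_mul_sub_eq_zero ha).mp hy)
  · have hpow := pow_factorial_card_add_one_eq_self_of_forall_prod_sub_eq_zero h
    obtain ⟨a, ha, hay⟩ := exists_completeOrthogonalIdempotents_forall_mul_eq_zero
      (Nat.factorial_ne_zero _) (fun i ↦ hpow (y - x i)) (h y)
    exact ⟨a, ha, (eq_sum_mul_iff_forall_mul_sub_eq_zero ha).mpr hay⟩

lemma isCFOI_iff_completeOrthogonalIdempotents {A : Type*} [CommRing A] {n : ℕ} {a : Fin n → A} :
    IsCFOI a ↔ CompleteOrthogonalIdempotents a :=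
  ⟨fun ⟨hidem, hortho, hsum⟩ ↦ ⟨⟨hidem, hortho⟩, hsum⟩,
    fun h ↦ ⟨h.idem, h.ortho, h.complete⟩⟩

theorem stmt_0 (A : Type*) [CommRing A] [IsReduced A] (n : ℕ) (x : Fin n → A) :
    (∀ y : A, ∃ a : Fin n → A, IsCFOI a ∧ y = ∑ i, a i * x i) ↔
      (∀ y : A, ∏ i, (y - x i) = 0) := by
  simpa only [isCFOI_iff_completeOrthogonalIdempotents] using stmt_0_general x
end

section
/- Let K be a field and let A be a commutative von Neumann regular K-algebra such that every element of A is a convex combination of elements of (the image in A of) K. Then A is isomorphic as a K-algebra to the ring of locally constant functions from the Zariski prime spectrum Spec(A) to K (where K carries the discrete topology), with pointwise operations. -/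
/-!
Both `A` and the algebra of locally constant functions `Spec A → K` map to the product of the
local rings of `A`: an element through its germs, a function through its values viewed in each local
ring. The germs of an idempotent `e` are `1` on the clopen set `D(e)` and `0` off it, so `e` and the
indicator function of `D(e)` have the same image. As every clopen set is some `D(e)`, and the
indicator functions of clopen sets generate the locally constant functions, the image of the
latter is the image of the subalgebra of `A` generated by idempotents, which here is all of `A`.
Since `A` embeds in the product of its local rings, it remains to see that a function `f` with image
`0` vanishes: multiplying by the indicator function of `f ⁻¹' {r} = D(e)` yields `r • e = 0`, and
`e ≠ 0` if `r` is a value of `f`, so `r = 0`.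
-/

section LocallyConstant

variable {X : Type*} [TopologicalSpace X] {R : Type*} [CommSemiring R]

theorem locallyConstant_mul_charFn_fiber (f : LocallyConstant X R) (r : R) :
    f * LocallyConstant.charFn R (f.isLocallyConstant.isClopen_fiber r) =
      r • LocallyConstant.charFn R (f.isLocallyConstant.isClopen_fiber r) := by
  ext x
  by_cases hx : f x = r <;> simp [LocallyConstant.coe_charFn, Set.indicator, hx]

theorem locallyConstant_eq_sum_smul_charFn_fiber [CompactSpace X] (f : LocallyConstant X R) :
    f = ∑ r ∈ f.range_finite.toFinset,
      r • LocallyConstant.charFn R (f.isLocallyConstant.isClopen_fiber r) := by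
  classical
  ext x
  change f x = LocallyConstant.evalₐ R x _
  simp [LocallyConstant.evalₐ, LocallyConstant.coe_charFn, Set.indicator]

variable (X R) in
theorem adjoin_charFn_eq_top [CompactSpace X] :
    Algebra.adjoin R {f : LocallyConstant X R |
      ∃ (U : Set X) (hU : IsClopen U), LocallyConstant.charFn R hU = f} = ⊤ := by
  refine Algebra.eq_top_iff.2 fun f ↦ ?_
  rw [locallyConstant_eq_sum_smul_charFn_fiber f]
  refine sum_mem fun r _ ↦ Subalgebra.smul_mem _ (Algebra.subset_adjoin ?_) r
  exact ⟨_, f.isLocallyConstant.isClopen_fiber r, rfl⟩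

end LocallyConstant

section Localization

variable {A : Type*} [CommRing A] {p : Ideal A} [p.IsPrime] (S : Type*) [CommRing S] [Algebra A S]
  [IsLocalization.AtPrime S p] {e : A}

theorem algebraMap_atPrime_eq_one_of_isIdempotentElem (he : IsIdempotentElem e) (hep : e ∉ p) :
    algebraMap A S e = 1 :=
  (IsIdempotentElem.iff_eq_one_of_isUnit
    (IsLocalization.map_units S (⟨e, hep⟩ : p.primeCompl))).1 (he.map (algebraMap A S))

theorem algebraMap_atPrime_eq_zero_of_isIdempotentElem (he : IsIdempotentElem e) (hep : e ∈ p) :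
    algebraMap A S e = 0 := by
  have h_compl : 1 - e ∉ p := fun h ↦ ‹p.IsPrime›.one_notMem (by simpa using p.add_mem h hep)
  simpa using algebraMap_atPrime_eq_one_of_isIdempotentElem S he.one_sub h_compl

end Localization

section PiLocalization

open MaximalSpectrum

variable (R A : Type*) [CommRing R] [CommRing A] [Algebra R A]

/-- The embedding of `A` into the product of its localizations at maximal ideals, regarded as a
homomorphism of algebras over the base ring `R`. -/
noncomputable def germsHom : A →ₐ[R] PiLocalization A :=
  (toPiLocalization A).restrictScalars R

/-- The homomorphism sending a locally constant function `f` on `Spec A` to the family of its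
values, the value `f m : R` being viewed in the localization of `A` at the maximal ideal `m`. -/
noncomputable def valuesHom : LocallyConstant (PrimeSpectrum A) R →ₐ[R] PiLocalization A :=
  AlgHom.pi fun m ↦
    (Algebra.ofId R (Localization.AtPrime m.asIdeal)).comp
      (LocallyConstant.evalₐ R m.toPrimeSpectrum)

theorem germsHom_injective : Function.Injective (germsHom R A) :=
  toPiLocalization_injective A

variable {R A}

theorem valuesHom_charFn {U : Set (PrimeSpectrum A)} (hU : IsClopen U) {e : A}
    (he : IsIdempotentElem e) (hUe : U = PrimeSpectrum.basicOpen e) :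
    valuesHom R A (LocallyConstant.charFn R hU) = germsHom R A e := by
  subst hUe
  funext m
  change algebraMap R (Localization.AtPrime m.asIdeal)
    (LocallyConstant.charFn R hU m.toPrimeSpectrum) = algebraMap A _ e
  by_cases hem : e ∈ m.toPrimeSpectrum.asIdeal
  · rw [algebraMap_atPrime_eq_zero_of_isIdempotentElem (p := m.asIdeal) _ he hem]
    simp [LocallyConstant.coe_charFn, Set.indicator, hem]
  · rw [algebraMap_atPrime_eq_one_of_isIdempotentElem (p := m.asIdeal) _ he hem]
    simp [LocallyConstant.coe_charFn, Set.indicator, hem]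

variable (R A) in
theorem valuesHom_range :
    (valuesHom R A).range =
      (Algebra.adjoin R {e : A | IsIdempotentElem e}).map (germsHom R A) := by
  rw [← Algebra.map_top, ← adjoin_charFn_eq_top, AlgHom.map_adjoin, AlgHom.map_adjoin]
  congr 1
  ext x
  constructor
  · rintro ⟨_, ⟨U, hU, rfl⟩, rfl⟩
    obtain ⟨e, he, hUe⟩ := PrimeSpectrum.isClopen_iff.1 hU
    exact ⟨e, he, (valuesHom_charFn hU he hUe).symm⟩
  · rintro ⟨e, he, rfl⟩
    have hU : IsClopen (PrimeSpectrum.basicOpen e : Set (PrimeSpectrum A)) :=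
      PrimeSpectrum.isClopen_iff.2 ⟨e, he, rfl⟩
    exact ⟨_, ⟨_, hU, rfl⟩, valuesHom_charFn hU he rfl⟩

theorem valuesHom_injective
    (hfaithful : ∀ (r : R) (e : A), IsIdempotentElem e → r • e = 0 → r = 0 ∨ e = 0) :
    Function.Injective (valuesHom R A) := by
  refine (injective_iff_map_eq_zero _).2 fun f hf ↦ LocallyConstant.ext fun p ↦ ?_
  have hU := f.isLocallyConstant.isClopen_fiber (f p)
  obtain ⟨e, he, hUe⟩ := PrimeSpectrum.isClopen_iff.1 hU
  have h_smul : f p • e = 0 := by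
    apply germsHom_injective R A
    calc germsHom R A (f p • e)
        = valuesHom R A (f p • LocallyConstant.charFn R hU) := by
          rw [map_smul, map_smul, valuesHom_charFn hU he hUe]
      _ = valuesHom R A (f * LocallyConstant.charFn R hU) := by
          rw [locallyConstant_mul_charFn_fiber]
      _ = germsHom R A 0 := by rw [map_mul, hf, zero_mul, map_zero]
  have he_ne_zero : e ≠ 0 := by
    rintro rfl
    have hp : p ∈ (PrimeSpectrum.basicOpen (0 : A) : Set (PrimeSpectrum A)) := hUe ▸ rfl
    simp at hp
  exact (hfaithful _ e he h_smul).resolve_right he_ne_zero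

end PiLocalization

theorem sum_mul_algebraMap_mem_adjoin_isIdempotentElem {R A ι : Type*} [CommSemiring R]
    [CommSemiring A] [Algebra R A] (s : Finset ι) {a : ι → A} (ha : ∀ i ∈ s, IsIdempotentElem (a i))
    (k : ι → R) :
    ∑ i ∈ s, a i * algebraMap R A (k i) ∈ Algebra.adjoin R {e : A | IsIdempotentElem e} :=
  sum_mem fun i hi ↦
    mul_mem (Algebra.subset_adjoin (ha i hi)) (Subalgebra.algebraMap_mem _ (k i))

theorem stmt_3_general (R : Type*) [CommRing R] (A : Type*) [CommRing A] [Algebra R A]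
    (hfaithful : ∀ (r : R) (e : A), IsIdempotentElem e → r • e = 0 → r = 0 ∨ e = 0)
    (hgen : Algebra.adjoin R {e : A | IsIdempotentElem e} = ⊤) :
    Nonempty (A ≃ₐ[R] LocallyConstant (PrimeSpectrum A) R) := by
  have h_range : (germsHom R A).range = (valuesHom R A).range := by
    rw [valuesHom_range, hgen, Algebra.map_top]
  exact ⟨(AlgEquiv.ofInjective _ (germsHom_injective R A)).trans <|
    (Subalgebra.equivOfEq _ _ h_range).trans
      (AlgEquiv.ofInjective _ (valuesHom_injective hfaithful)).symm⟩

theorem stmt_3 (K : Type*) [Field K] (A : Type*) [CommRing A] [Algebra K A]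
    (hreg : ∀ a : A, ∃ b : A, a = a ^ 2 * b)
    (hconv : ∀ y : A, ∃ (n : ℕ) (a : Fin n → A) (k : Fin n → K),
      IsCFOI a ∧ y = ∑ i, a i * algebraMap K A (k i)) :
    Nonempty (A ≃ₐ[K] LocallyConstant (PrimeSpectrum A) K) := by
  refine stmt_3_general K A (fun _ _ _ ↦ smul_eq_zero.1) (Algebra.eq_top_iff.2 fun y ↦ ?_)
  obtain ⟨n, a, k, ⟨h_idem, -, -⟩, rfl⟩ := hconv y
  exact sum_mul_algebraMap_mem_adjoin_isIdempotentElem _ (fun i _ ↦ h_idem i) k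
end

section
/- Let A be a CFG-ring and let f : A → A be a polynomial map, i.e., there is a polynomial F ∈ A[X] with f(x) = F(x) for all x ∈ A. Then the set of iterated maps {f^k : k ∈ ℕ} is finite. -/
/-!
Modulo a prime ideal `P`, the identity `∏ i, (y - x i) = 0` says that every element of the domain
`A ⧸ P` is the class of some `x i`, so `A ⧸ P` has at most `n` elements. A polynomial map induces a
self-map of `A ⧸ P`, and `f^[n ! + n] = f^[n]` for every self-map `f` of a set with at most `n`
elements. The exponents do not depend on `P`, and the prime ideals of a reduced ring intersect
in `0`, so the same equation holds in `A`.
-/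

open Function
open scoped Nat

section Dynamics

variable {α : Type*}

theorem finite_range_of_periodic_add {u : ℕ → α} {m p : ℕ} (hp : 0 < p)
    (hu : Periodic (fun k ↦ u (m + k)) p) : (Set.range u).Finite := by
  refine ((Set.finite_Iio (m + p)).image u).subset ?_
  rintro _ ⟨k, rfl⟩
  obtain hk | hk := lt_or_ge k m
  · exact ⟨k, Nat.lt_add_right p hk, rfl⟩
  · obtain ⟨j, rfl⟩ := Nat.exists_eq_add_of_le hk
    exact ⟨m + j % p, Nat.add_lt_add_left (Nat.mod_lt j hp) m, hu.map_mod_nat j⟩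

theorem finite_range_iterate_of_iterate_add_eq {f : α → α} {m p : ℕ} (hp : 0 < p)
    (hf : f^[p + m] = f^[m]) : (Set.range fun k : ℕ ↦ f^[k]).Finite := by
  refine finite_range_of_periodic_add (m := m) hp fun k ↦ ?_
  calc
    f^[m + (k + p)] = f^[k] ∘ f^[p + m] := by rw [← iterate_add]; congr 1; ring
    _ = f^[m + k] := by rw [hf, ← iterate_add, add_comm]

theorem iterate_mem_periodicPts {f : α → α} {x : α} {m n : ℕ} (hmn : m ≤ n)
    (hx : f^[m] x ∈ periodicPts f) : f^[n] x ∈ periodicPts f := by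
  obtain ⟨p, hp, hper⟩ := hx
  rw [← Nat.sub_add_cancel hmn, iterate_add_apply]
  exact mk_mem_periodicPts hp (hper.apply_iterate _)

theorem iterate_card_mem_periodicPts [Fintype α] (f : α → α) (x : α) :
    f^[Fintype.card α] x ∈ periodicPts f := by
  obtain ⟨i, j, hne, heq⟩ := Fintype.exists_ne_map_eq_of_card_lt
    (fun k : Fin (Fintype.card α + 1) ↦ f^[k] x) (by simp)
  wlog hij : i < j generalizing i j
  · exact this j i hne.symm heq.symm (hne.symm.lt_of_le (not_lt.1 hij))
  have hper : IsPeriodicPt f (j - i : ℕ) (f^[i] x) := by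
    rw [IsPeriodicPt, IsFixedPt, ← iterate_add_apply, Nat.sub_add_cancel hij.le]
    exact heq.symm
  exact iterate_mem_periodicPts i.is_le (mk_mem_periodicPts (Nat.sub_pos_of_lt hij) hper)

theorem iterate_factorial_add_of_card_le [Fintype α] {n : ℕ} (hn : Fintype.card α ≤ n)
    (f : α → α) : f^[n ! + n] = f^[n] := by
  funext x
  have hmem : f^[n] x ∈ periodicPts f :=
    iterate_mem_periodicPts hn (iterate_card_mem_periodicPts f x)
  have hper : IsPeriodicPt f n ! (f^[n] x) :=
    (isPeriodicPt_factorial_card_of_mem_periodicPts hmem).trans_dvd (Nat.factorial_dvd_factorial hn)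
  rw [iterate_add_apply, hper.eq]

end Dynamics

theorem surjective_of_prod_sub_eq_zero {R ι : Type*} [CommRing R] [IsDomain R] [Fintype ι]
    {x : ι → R} (hx : ∀ y, ∏ i, (y - x i) = 0) : Surjective x := fun y ↦ by
  obtain ⟨i, -, hi⟩ := Finset.prod_eq_zero_iff.1 (hx y)
  exact ⟨i, (sub_eq_zero.1 hi).symm⟩

theorem eq_of_forall_isPrime_mk_eq {R : Type*} [CommRing R] [IsReduced R] {a b : R}
    (h : ∀ P : Ideal R, P.IsPrime → Ideal.Quotient.mk P a = Ideal.Quotient.mk P b) : a = b :=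
  sub_eq_zero.1 <| IsReduced.eq_zero _ <| nilpotent_iff_mem_prime.2 fun P hP ↦
    Ideal.Quotient.eq.1 (h P hP)

/-- A self-map of a ring is congruence preserving if it respects congruence modulo every principal
ideal, hence modulo every ideal. Polynomial maps are the basic example; the property is what lets
a map descend to all quotient rings. -/
def CongruencePreserving {R : Type*} [CommRing R] (f : R → R) : Prop :=
  ∀ y z, y - z ∣ f y - f z

theorem congruencePreserving_eval {R : Type*} [CommRing R] (F : Polynomial R) :
    CongruencePreserving fun y ↦ F.eval y :=
  fun y z ↦ F.sub_dvd_eval_sub y z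

namespace CongruencePreserving

variable {R : Type*} [CommRing R] {f : R → R}

theorem exists_semiconj_mk (hf : CongruencePreserving f) (I : Ideal R) :
    ∃ g : R ⧸ I → R ⧸ I, Semiconj (Ideal.Quotient.mk I) f g := by
  have hfac : FactorsThrough (Ideal.Quotient.mk I ∘ f) (Ideal.Quotient.mk I) := fun y z hyz ↦
    Ideal.Quotient.eq.2 (I.mem_of_dvd (hf y z) (Ideal.Quotient.eq.1 hyz))
  obtain ⟨g, hg⟩ := (factorsThrough_iff _).1 hfac
  exact ⟨g, congr_fun hg⟩

theorem iterate_factorial_add [IsReduced R] {ι : Type*} [Fintype ι] {x : ι → R}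
    (hx : ∀ y, ∏ i, (y - x i) = 0) (hf : CongruencePreserving f) :
    f^[(Fintype.card ι)! + Fintype.card ι] = f^[Fintype.card ι] := by
  funext y
  refine eq_of_forall_isPrime_mk_eq fun P _ ↦ ?_
  have hsurj : Surjective fun i ↦ Ideal.Quotient.mk P (x i) := by
    refine surjective_of_prod_sub_eq_zero (Ideal.Quotient.mk_surjective.forall.2 fun z ↦ ?_)
    simpa only [map_prod, map_sub, map_zero] using congr_arg (Ideal.Quotient.mk P) (hx z)
  have : Fintype (R ⧸ P) := @Fintype.ofFinite _ (Finite.of_surjective _ hsurj)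
  obtain ⟨g, hg⟩ := hf.exists_semiconj_mk P
  rw [hg.iterate_right _ y, hg.iterate_right _ y,
    iterate_factorial_add_of_card_le (Fintype.card_le_of_surjective _ hsurj) g]

end CongruencePreserving

theorem stmt_5_general {R ι : Type*} [CommRing R] [IsReduced R] [Fintype ι] {x : ι → R}
    (hx : ∀ y, ∏ i, (y - x i) = 0) {f : R → R} (hf : CongruencePreserving f) :
    (Set.range fun k : ℕ ↦ f^[k]).Finite :=
  finite_range_iterate_of_iterate_add_eq (Nat.factorial_pos _) (hf.iterate_factorial_add hx)

theorem stmt_5 (A : Type*) [CommRing A] [IsReduced A]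
    (n : ℕ) (x : Fin n → A) (hCFG : ∀ y : A, ∏ i, (y - x i) = 0)
    (f : A → A) (F : Polynomial A) (hf : ∀ y : A, f y = F.eval y) :
    (Set.range fun k : ℕ => f^[k]).Finite := by
  obtain rfl : f = fun y ↦ F.eval y := funext hf
  exact stmt_5_general hCFG (congruencePreserving_eval F)
end

section
/- Let A be a CFG-ring and let R be a finitely generated subring of A (i.e., R is the subring generated by a finite subset of A). Then R is finite. -/
/-!
In a CFG-ring the monic polynomial `p = ∏ᵢ (X - xᵢ)` vanishes at every element, and the existence
of such a `p`, say of degree `n`, already forces finiteness. On the one hand, the `n`-th finite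
difference of `p` is the constant `n!`, so the ring has positive characteristic. On the other hand,
the Vandermonde determinant of any `n + 1` roots of `p` vanishes; at the powers `1, y, …, yⁿ` this
reads `∏_{i < j} (yʲ - yⁱ) = 0`, a monic equation for `y` over the prime ring. Hence a finitely
generated subring is a finite module over a finite ring.
-/

open Polynomial
open scoped Nat

section MonicVanishing

variable {A : Type*} [CommRing A] {p : A[X]}

theorem det_vandermonde_eq_zero_of_eval_eq_zero (hp : p.Monic) (v : Fin (p.natDegree + 1) → A)
    (hv : ∀ i, p.eval (v i) = 0) : (Matrix.vandermonde v).det = 0 := by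
  nontriviality A
  -- Replacing `Xⁿ` by `p` in the monomial basis keeps the determinant and kills the last column.
  let q : Fin (p.natDegree + 1) → A[X] := Fin.snoc (fun j ↦ X ^ (j : ℕ)) p
  have hq_deg (i) : (q i).natDegree = i := by
    induction i using Fin.lastCases <;> simp [q]
  have hq_monic (i) : (q i).Monic := by
    induction i using Fin.lastCases <;> simp [q, hp, monic_X_pow]
  rw [Matrix.det_eval_matrixOfPolynomials_eq_det_vandermonde v q hq_deg hq_monic]
  exact Matrix.det_eq_zero_of_column_eq_zero (Fin.last _) fun i ↦ by simp [q, hv]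

theorem natDegree_factorial_eq_zero_of_forall_eval_eq_zero (hp : p.Monic)
    (hroot : ∀ y, p.eval y = 0) : (p.natDegree ! : A) = 0 := by
  have hdiff := congrFun p.fwdDiff_iter_degree_eq_factorial 0
  have heval : (fun y ↦ p.eval y) = 0 := funext hroot
  simpa [heval, hp.leadingCoeff, fwdDiff_iter_eq_sum_shift] using hdiff.symm

theorem ringChar_ne_zero_of_forall_eval_eq_zero (hp : p.Monic) (hroot : ∀ y, p.eval y = 0) :
    ringChar A ≠ 0 :=
  ne_zero_of_dvd_ne_zero p.natDegree.factorial_ne_zero <|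
    ringChar.dvd (natDegree_factorial_eq_zero_of_forall_eval_eq_zero hp hroot)

theorem isIntegral_of_forall_eval_pow_eq_zero (R : Type*) [CommRing R] [Algebra R A]
    (hp : p.Monic) {y : A} (hroot : ∀ k : ℕ, p.eval (y ^ k) = 0) : IsIntegral R y := by
  nontriviality R
  have hdet : ∏ i : Fin (p.natDegree + 1), ∏ j ∈ Finset.Ioi i, (y ^ (j : ℕ) - y ^ (i : ℕ)) = 0 := by
    rw [← Matrix.det_vandermonde]
    exact det_vandermonde_eq_zero_of_eval_eq_zero hp _ fun i ↦ hroot i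
  refine ⟨∏ i : Fin (p.natDegree + 1), ∏ j ∈ Finset.Ioi i, (X ^ (j : ℕ) - X ^ (i : ℕ)), ?_, ?_⟩
  · refine monic_prod_of_monic _ _ fun i _ ↦ monic_prod_of_monic _ _ fun j hij ↦
      monic_X_pow_sub ?_
    rw [degree_X_pow]
    exact_mod_cast Finset.mem_Ioi.mp hij
  · simpa [eval₂_finsetProd] using hdet

end MonicVanishing

theorem finite_adjoin_of_isIntegral {R A : Type*} [CommRing R] [Finite R] [CommRing A]
    [Algebra R A] {s : Set A} (hs : s.Finite) (hint : ∀ y ∈ s, IsIntegral R y) :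
    (Algebra.adjoin R s : Set A).Finite :=
  have := Algebra.finite_adjoin_of_finite_of_isIntegral hs hint
  Module.finite_of_finite R

theorem stmt_6_general {A : Type*} [CommRing A] {p : A[X]} (hp : p.Monic)
    (hroot : ∀ y, p.eval y = 0) {s : Set A} (hs : s.Finite) :
    (Subring.closure s : Set A).Finite := by
  have : NeZero (ringChar A) := ⟨ringChar_ne_zero_of_forall_eval_eq_zero hp hroot⟩
  let _ : Algebra (ZMod (ringChar A)) A := ZMod.algebra A (ringChar A)
  have hadjoin : (Algebra.adjoin (ZMod (ringChar A)) s : Set A).Finite :=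
    finite_adjoin_of_isIntegral hs fun y _ ↦
      isIntegral_of_forall_eval_pow_eq_zero _ hp fun k ↦ hroot (y ^ k)
  have hle : Subring.closure s ≤ (Algebra.adjoin (ZMod (ringChar A)) s).toSubring :=
    Subring.closure_le.mpr Algebra.subset_adjoin
  exact hadjoin.subset hle

theorem stmt_6 (A : Type*) [CommRing A] [IsReduced A]
    (n : ℕ) (x : Fin n → A) (hCFG : ∀ y : A, ∏ i, (y - x i) = 0)
    (s : Set A) (hs : s.Finite) :
    ((Subring.closure s : Subring A) : Set A).Finite := by
  have hroot (y : A) : (∏ i, (X - C (x i))).eval y = 0 := by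
    simpa only [eval_prod, eval_sub, eval_X, eval_C] using hCFG y
  exact stmt_6_general (monic_prod_X_sub_C x Finset.univ) hroot hs
end

section
/- Let K be a field, B a Boolean ring, and let p be a prime ideal of A = K^[B]. Then the composite K → A → A/p of the inclusion of constants with the quotient projection is a ring isomorphism; in particular A/p is isomorphic to K. -/
/-! A locally constant function `f` on a compact space takes finitely many values `c₁, …, cₙ`, so
`(f - c₁) ⋯ (f - cₙ) = 0`. A prime ideal therefore contains some `f - cᵢ`, which means that `f` is
congruent to a constant. -/

theorem quotientMk_comp_algebraMap_surjective_of_prod_mem {R A : Type*} [CommRing R] [CommRing A]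
    [Algebra R A] (p : Ideal A) [p.IsPrime]
    (h : ∀ a : A, ∃ s : Finset R, ∏ c ∈ s, (a - algebraMap R A c) ∈ p) :
    Function.Surjective ((Ideal.Quotient.mk p).comp (algebraMap R A)) := by
  intro q
  obtain ⟨a, rfl⟩ := Ideal.Quotient.mk_surjective q
  obtain ⟨s, hs⟩ := h a
  obtain ⟨c, -, hc⟩ := Ideal.IsPrime.prod_mem_iff.1 hs
  exact ⟨c, (Ideal.Quotient.eq.2 hc).symm⟩

theorem prod_sub_algebraMap_eq_zero_of_forall_mem {X R : Type*} [TopologicalSpace X] [CommRing R]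
    {f : LocallyConstant X R} {s : Finset R} (hs : ∀ x, f x ∈ s) :
    ∏ c ∈ s, (f - algebraMap R (LocallyConstant X R) c) = 0 := by
  ext x
  calc (∏ c ∈ s, (f - algebraMap R (LocallyConstant X R) c)) x
      = ∏ c ∈ s, (f x - c) := map_prod (LocallyConstant.evalRingHom x) _ s
    _ = 0 := Finset.prod_eq_zero (hs x) (sub_self (f x))

theorem stmt_7_general {K X : Type*} [Field K] [TopologicalSpace X] [CompactSpace X]
    (p : Ideal (LocallyConstant X K)) [p.IsPrime] :
    Function.Bijective
      ((Ideal.Quotient.mk p).comp (algebraMap K (LocallyConstant X K))) := by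
  refine ⟨RingHom.injective _, quotientMk_comp_algebraMap_surjective_of_prod_mem p fun f => ?_⟩
  have hprod : ∏ c ∈ f.range_finite.toFinset, (f - algebraMap K (LocallyConstant X K) c) = 0 :=
    prod_sub_algebraMap_eq_zero_of_forall_mem fun x =>
      f.range_finite.mem_toFinset.2 (Set.mem_range_self x)
  exact ⟨f.range_finite.toFinset, hprod ▸ p.zero_mem⟩

theorem stmt_7 (K : Type*) [Field K] (B : Type*) [BooleanRing B]
    (p : Ideal (LocallyConstant (PrimeSpectrum B) K)) (hp : p.IsPrime) :
    Function.Bijective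
      ((Ideal.Quotient.mk p).comp
        (algebraMap K (LocallyConstant (PrimeSpectrum B) K))) := by
  exact stmt_7_general p
end

section
/- Let A be a CFG-ring. Then there exist n ∈ ℕ, nontrivial Boolean rings B₁,…,Bₙ, and pairwise non-isomorphic finite fields K₁,…,Kₙ such that A is isomorphic as a ring to the product K₁^[B₁] × ⋯ × Kₙ^[Bₙ]. -/
/-- A "piece" of the decomposition of a CFG-ring: a finite field `K`
together with a nontrivial Boolean ring `B`. -/
structure CFGPiece : Type 1 where
  K : Type
  fieldK : Field K
  finiteK : Finite K
  B : Type
  boolB : BooleanRing B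
  ntB : Nontrivial B

attribute [instance] CFGPiece.fieldK CFGPiece.finiteK CFGPiece.boolB CFGPiece.ntB

/-!
If `∏ i, (a - x i) = 0` for all `a`, every residue domain `A ⧸ I` consists of the classes of the
`x i`. It is thus a finite field of size at most `N`, and reducedness gives `a ^ (N! + 1) = a` in
`A`. This identity makes `S = ℤ[x₁, …, x_N] ⊆ A` integral over `ℤ` and of positive characteristic,
hence finite, so `A` is the product of its fibres `A ⧸ mA` over the maximal ideals `m` of `S`; each
fibre is an `S ⧸ m`-algebra all of whose residue fields equal `S ⧸ m`. Fibres with isomorphic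
residue fields are merged, and an algebra `C` whose residue fields all equal a finite field `K` is
the algebra of locally constant functions `Spec C → K`. By Stone duality `Spec C` is the spectrum of
a Boolean ring.
-/

open Function

universe u v

section ForallPowEqSelf

variable {A : Type*} [CommRing A] {n : ℕ}

theorem isReduced_of_forall_pow_eq_self (hn : 1 < n) (hA : ∀ a : A, a ^ n = a) : IsReduced A :=
  (isReduced_iff_pow_one_lt n hn).2 fun a ha ↦ (hA a).symm.trans ha

theorem isIntegral_of_forall_pow_eq_self (R : Type*) [CommRing R] [Algebra R A] (hn : 1 < n)
    (hA : ∀ a : A, a ^ n = a) : Algebra.IsIntegral R A where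
  isIntegral a := by
    refine ⟨.X ^ n - .X, Polynomial.monic_X_pow_sub ?_, by simp [hA]⟩
    exact Polynomial.degree_X_le.trans_lt (by exact_mod_cast hn)

theorem finite_adjoin_int_of_forall_pow_eq_self (hn : 1 < n) (hA : ∀ a : A, a ^ n = a)
    {s : Set A} (hs : s.Finite) : Finite (Algebra.adjoin ℤ s) := by
  have := isIntegral_of_forall_pow_eq_self ℤ hn hA
  have : Module.Finite ℤ (Algebra.adjoin ℤ s) :=
    .of_fg (fg_adjoin_of_finite hs fun a _ ↦ Algebra.IsIntegral.isIntegral a)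
  have two_lt : (2 : ℤ) ^ 1 < 2 ^ n := pow_lt_pow_right₀ one_lt_two hn
  refine Module.finite_of_fg_torsion _ fun a ↦
    ⟨⟨2 ^ n - 2, mem_nonZeroDivisors_of_ne_zero (by linarith)⟩, ?_⟩
  ext
  simp [Submonoid.smul_def, hA]

theorem totallySeparatedSpace_primeSpectrum_of_forall_pow_eq_self (hn : 1 < n)
    (hA : ∀ a : A, a ^ n = a) : TotallySeparatedSpace (PrimeSpectrum A) := by
  refine totallySeparatedSpace_of_t0_of_basis_clopen <|
    PrimeSpectrum.isTopologicalBasis_basic_opens.of_isOpen_of_subset (fun U hU ↦ hU.isOpen) ?_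
  rintro _ ⟨a, rfl⟩
  have idem : IsIdempotentElem (a ^ (n - 1)) := by
    calc a ^ (n - 1) * a ^ (n - 1) = a ^ n * a ^ (n - 2) := by
          rw [← pow_add, ← pow_add]; congr 1; omega
      _ = a ^ (n - 1) := by rw [hA, ← pow_succ']; congr 1; omega
  exact PrimeSpectrum.isClopen_iff.2
    ⟨_, idem, by rw [PrimeSpectrum.basicOpen_pow a (n - 1) (by omega)]⟩

end ForallPowEqSelf

section ProdSubEqZero

variable {A ι : Type*} [CommRing A] [Fintype ι] {x : ι → A} (hx : ∀ a : A, ∏ i, (a - x i) = 0)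
include hx

theorem quotient_mk_comp_surjective (I : Ideal A) [I.IsPrime] :
    Surjective fun i ↦ Ideal.Quotient.mk I (x i) := by
  intro b
  obtain ⟨a, rfl⟩ := Ideal.Quotient.mk_surjective b
  obtain ⟨i, -, hi⟩ := Ideal.IsPrime.prod_mem_iff.1 (hx a ▸ I.zero_mem)
  exact ⟨i, (Ideal.Quotient.eq.2 hi).symm⟩

theorem pow_factorial_card_add_one_eq_self [IsReduced A] (a : A) :
    a ^ ((Fintype.card ι).factorial + 1) = a := by
  refine sub_eq_zero.1 (nilpotent_iff_mem_prime.2 fun I hI ↦ ?_).eq_zero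
  have surj := quotient_mk_comp_surjective hx I
  have := Finite.of_surjective _ surj
  let : Field (A ⧸ I) := (Finite.isField_of_domain _).toField
  let := Fintype.ofFinite (A ⧸ I)
  rw [← Ideal.Quotient.eq_zero_iff_mem, map_sub, map_pow, sub_eq_zero]
  rcases eq_or_ne (Ideal.Quotient.mk I a) 0 with ha | ha
  · simp [ha]
  · have card_sub_one_dvd : Fintype.card (A ⧸ I) - 1 ∣ (Fintype.card ι).factorial := by
      have := Fintype.one_lt_card (α := A ⧸ I)
      have := Fintype.card_le_of_surjective _ surj
      exact Nat.dvd_factorial (by omega) (by omega)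
    obtain ⟨d, hd⟩ := card_sub_one_dvd
    rw [pow_succ, hd, pow_mul, FiniteField.pow_card_sub_one_eq_one _ ha, one_pow, one_mul]

end ProdSubEqZero

section FieldValued

variable {K C : Type*} [Field K] [CommRing C] [Algebra K C]

theorem prod_sub_algebraMap_eq_pow_card_sub [Fintype K] (c : C) :
    ∏ k : K, (c - algebraMap K C k) = c ^ Fintype.card K - c := by
  have monic : (.X ^ Fintype.card K - .X : Polynomial K).Monic :=
    Polynomial.monic_X_pow_sub (by simpa using Fintype.one_lt_card)
  have factorization := Polynomial.prod_multiset_X_sub_C_of_monic_of_roots_card_eq monic (by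
    rw [FiniteField.roots_X_pow_card_sub_X,
      FiniteField.X_pow_card_sub_X_natDegree_eq K Fintype.one_lt_card]
    rfl)
  rw [FiniteField.roots_X_pow_card_sub_X] at factorization
  simpa [map_prod] using congrArg (Polynomial.aeval c) factorization

theorem pow_card_eq_self_of_algebraMap_quotient_surjective [Finite K] [IsReduced C]
    (hsurj : ∀ I : Ideal C, I.IsPrime → Surjective (algebraMap K (C ⧸ I))) (c : C) :
    c ^ Nat.card K = c := by
  cases nonempty_fintype K
  refine sub_eq_zero.1 (nilpotent_iff_mem_prime.2 fun I hI ↦ ?_).eq_zero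
  obtain ⟨k, hk⟩ := hsurj I hI (Ideal.Quotient.mk I c)
  rw [← Ideal.Quotient.eq_zero_iff_mem, map_sub, map_pow, ← hk, ← map_pow,
    Nat.card_eq_fintype_card, FiniteField.pow_card, sub_self]

variable [Finite K] (hC : ∀ c : C, c ^ Nat.card K = c)
include hC

theorem exists_sub_algebraMap_mem (I : Ideal C) [I.IsPrime] (c : C) :
    ∃ k : K, c - algebraMap K C k ∈ I := by
  cases nonempty_fintype K
  have prod_mem : ∏ k : K, (c - algebraMap K C k) ∈ I := by
    simp [prod_sub_algebraMap_eq_pow_card_sub, ← Nat.card_eq_fintype_card, hC]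
  simpa using Ideal.IsPrime.prod_mem_iff.1 prod_mem

theorem algebraMap_quotient_bijective (I : Ideal C) [I.IsPrime] :
    Bijective (algebraMap K (C ⧸ I)) := by
  refine ⟨(algebraMap K (C ⧸ I)).injective, fun b ↦ ?_⟩
  obtain ⟨c, rfl⟩ := Ideal.Quotient.mk_surjective b
  obtain ⟨k, hk⟩ := exists_sub_algebraMap_mem hC I c
  exact ⟨k, (Ideal.Quotient.eq.2 hk).symm⟩

/-- The homomorphism `C → C ⧸ p ≃ K`: evaluation of an element of `C`, regarded as a `K`-valued
function on its prime spectrum, at the point `p`. -/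
noncomputable def residueValue (p : PrimeSpectrum C) : C →ₐ[K] K :=
  (AlgEquiv.ofBijective (Algebra.ofId K (C ⧸ p.asIdeal))
    (algebraMap_quotient_bijective hC p.asIdeal)).symm.toAlgHom.comp
    (Ideal.Quotient.mkₐ K p.asIdeal)

theorem residueValue_eq_iff {p : PrimeSpectrum C} {c : C} {k : K} :
    residueValue hC p c = k ↔ c - algebraMap K C k ∈ p.asIdeal := by
  rw [← Ideal.Quotient.eq]
  exact (AlgEquiv.ofBijective (Algebra.ofId K (C ⧸ p.asIdeal))
    (algebraMap_quotient_bijective hC p.asIdeal)).symm_apply_eq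

theorem residueValue_eq_zero_iff {p : PrimeSpectrum C} {c : C} :
    residueValue hC p c = 0 ↔ c ∈ p.asIdeal := by
  simp [residueValue_eq_iff]

theorem residueValue_of_isIdempotentElem {p : PrimeSpectrum C} {e : C} (he : IsIdempotentElem e)
    [Decidable (p ∈ PrimeSpectrum.basicOpen e)] :
    residueValue hC p e = if p ∈ PrimeSpectrum.basicOpen e then 1 else 0 := by
  split_ifs with hp
  · exact (IsIdempotentElem.iff_eq_zero_or_one.1 (he.map (residueValue hC p))).resolve_left
      fun h ↦ hp ((residueValue_eq_zero_iff hC).1 h)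
  · exact (residueValue_eq_zero_iff hC).2 (not_not.1 hp)

theorem isLocallyConstant_residueValue (c : C) :
    IsLocallyConstant fun p ↦ residueValue hC p c := by
  let : TopologicalSpace K := ⊥
  have : DiscreteTopology K := ⟨rfl⟩
  refine IsLocallyConstant.iff_continuous _ |>.2 (continuous_iff_isClosed.2 fun s _ ↦ ?_)
  rw [← Set.biUnion_preimage_singleton]
  refine s.toFinite.isClosed_biUnion fun k _ ↦ ?_
  convert PrimeSpectrum.isClosed_zeroLocus {c - algebraMap K C k} using 1
  ext p
  simp [residueValue_eq_iff]

/-- The Gelfand transform of a `K`-algebra `C` with `c ^ |K| = c`, sending `c` to the locally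
constant function `p ↦ c mod p`. -/
noncomputable def toLocallyConstant : C →ₐ[K] LocallyConstant (PrimeSpectrum C) K where
  toFun c := ⟨fun p ↦ residueValue hC p c, isLocallyConstant_residueValue hC c⟩
  map_one' := by ext p; exact map_one (residueValue hC p)
  map_mul' a b := by ext p; exact map_mul (residueValue hC p) a b
  map_zero' := by ext p; exact map_zero (residueValue hC p)
  map_add' a b := by ext p; exact map_add (residueValue hC p) a b
  commutes' k := by ext p; exact (residueValue hC p).commutes k

theorem toLocallyConstant_apply (c : C) (p : PrimeSpectrum C) :
    toLocallyConstant hC c p = residueValue hC p c := rfl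

theorem toLocallyConstant_injective : Injective (toLocallyConstant hC) := by
  refine (injective_iff_map_eq_zero _).2 fun c hc ↦ ?_
  have := isReduced_of_forall_pow_eq_self Finite.one_lt_card hC
  refine (nilpotent_iff_mem_prime.2 fun I hI ↦ ?_).eq_zero
  exact (residueValue_eq_zero_iff hC (p := ⟨I, hI⟩)).1 (DFunLike.congr_fun hc _)

theorem toLocallyConstant_surjective : Surjective (toLocallyConstant hC) := by
  classical
  cases nonempty_fintype K
  intro f
  choose e he hfiber using fun k ↦
    PrimeSpectrum.isClopen_iff.1 (f.isLocallyConstant.isClopen_fiber k)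
  have mem_basicOpen (k : K) (p : PrimeSpectrum C) :
      p ∈ PrimeSpectrum.basicOpen (e k) ↔ f p = k :=
    (Set.ext_iff.1 (hfiber k) p).symm
  refine ⟨∑ k, k • e k, LocallyConstant.ext fun p ↦ ?_⟩
  rw [toLocallyConstant_apply]
  simp [residueValue_of_isIdempotentElem hC (he _), mem_basicOpen]

/-- The Gelfand transform of a `K`-algebra `C` with `c ^ |K| = c`, as an isomorphism onto all
locally constant functions: `C` is the algebra the paper denotes `K^[B]`, with `Spec C` in the role
of `Spec B`. -/
noncomputable def locallyConstantEquiv : C ≃ₐ[K] LocallyConstant (PrimeSpectrum C) K :=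
  .ofBijective (toLocallyConstant hC)
    ⟨toLocallyConstant_injective hC, toLocallyConstant_surjective hC⟩

end FieldValued

section Stone

variable (Y k : Type*) [TopologicalSpace Y] [Field k]

/-- The prime ideal of the locally constant functions `Y → k` that vanish at the point `y`. -/
def evalKer (y : Y) : PrimeSpectrum (LocallyConstant Y k) :=
  ⟨RingHom.ker (LocallyConstant.evalRingHom y), RingHom.ker_isPrime _⟩

variable {Y k}

theorem mem_evalKer {y : Y} {f : LocallyConstant Y k} :
    f ∈ (evalKer Y k y).asIdeal ↔ f y = 0 := .rfl

theorem continuous_evalKer : Continuous (evalKer Y k) := by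
  refine PrimeSpectrum.isTopologicalBasis_basic_opens.continuous_iff.2 ?_
  rintro _ ⟨f, rfl⟩
  exact f.isLocallyConstant {0}ᶜ

theorem evalKer_injective [TotallySeparatedSpace Y] : Injective (evalKer Y k) := by
  intro y z hyz
  by_contra hne
  obtain ⟨U, hU, hyU, hzU⟩ := exists_isClopen_of_totally_separated hne
  have char_mem : LocallyConstant.charFn k hU ∈ (evalKer Y k y).asIdeal :=
    hyz ▸ mem_evalKer.2 ((LocallyConstant.charFn_eq_zero k z hU).2 hzU)
  exact (LocallyConstant.charFn_eq_zero k y hU).1 char_mem hyU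

theorem evalKer_surjective [CompactSpace Y] : Surjective (evalKer Y k) := by
  intro P
  suffices ∃ y, (evalKer Y k y).asIdeal ≤ P.asIdeal by
    obtain ⟨y, hy⟩ := this
    have : (evalKer Y k y).asIdeal.IsMaximal :=
      RingHom.ker_isMaximal_of_surjective _ fun a ↦ ⟨.const Y a, rfl⟩
    exact ⟨y, PrimeSpectrum.ext (this.eq_of_le P.isPrime.ne_top hy)⟩
  by_contra! hP
  choose f hf hfP using fun y ↦ SetLike.not_le_iff_exists.1 (hP y)
  obtain ⟨t, ht⟩ := isCompact_univ.elim_finite_subcover (fun y ↦ {z | f y z = 0})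
    (fun y ↦ (f y).isLocallyConstant.isOpen_fiber 0) fun y _ ↦ Set.mem_iUnion.2 ⟨y, hf y⟩
  have prod_eq_zero : ∏ y ∈ t, f y = 0 := by
    ext z
    obtain ⟨y, hy, hyz⟩ := Set.mem_iUnion₂.1 (ht (Set.mem_univ z))
    exact (map_prod (LocallyConstant.evalRingHom z) f t).trans (Finset.prod_eq_zero hy hyz)
  obtain ⟨y, -, hy⟩ := Ideal.IsPrime.prod_mem_iff.1 (prod_eq_zero ▸ P.asIdeal.zero_mem)
  exact hfP y hy

theorem isOpenMap_evalKer [CompactSpace Y] [TotallySeparatedSpace Y] :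
    IsOpenMap (evalKer Y k) := by
  refine isTopologicalBasis_isClopen.isOpenMap_iff.2 fun U hU ↦ ?_
  convert (PrimeSpectrum.basicOpen (LocallyConstant.charFn k hU)).isOpen
  ext P
  obtain ⟨y, rfl⟩ := evalKer_surjective P
  simp [evalKer_injective.mem_set_image, mem_evalKer, LocallyConstant.charFn_eq_zero]

/-- A compact totally separated space is the prime spectrum of its ring of locally constant
functions, for any field of values `k`. This is Stone duality when `k` has two elements. -/
noncomputable def evalKerHomeomorph (Y k : Type*) [TopologicalSpace Y] [Field k] [CompactSpace Y]
    [TotallySeparatedSpace Y] : Y ≃ₜ PrimeSpectrum (LocallyConstant Y k) :=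
  IsHomeomorph.homeomorph (evalKer Y k) ⟨continuous_evalKer, isOpenMap_evalKer,
    evalKer_injective, evalKer_surjective⟩

/-- The Boolean ring of clopen subsets of `Y`, encoded by their indicator functions to `ZMod 2`. -/
noncomputable abbrev booleanRingLocallyConstant (Y : Type*) [TopologicalSpace Y] :
    BooleanRing (LocallyConstant Y (ZMod 2)) where
  isIdempotentElem f := LocallyConstant.ext fun y ↦ ZMod.pow_card (f y) ▸ (sq (f y)).symm

end Stone

theorem exists_booleanRing_homeomorph (Y : Type u) [TopologicalSpace Y] [CompactSpace Y]
    [TotallySeparatedSpace Y] [Nonempty Y] :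
    ∃ (B : Type u) (_ : BooleanRing B), Nontrivial B ∧ Nonempty (Y ≃ₜ PrimeSpectrum B) :=
  let := booleanRingLocallyConstant Y
  ⟨LocallyConstant Y (ZMod 2), this,
    (LocallyConstant.evalRingHom (Classical.arbitrary Y)).domain_nontrivial,
    ⟨evalKerHomeomorph Y (ZMod 2)⟩⟩

theorem exists_booleanRing_algEquiv_locallyConstant {K : Type*} {C : Type u} [Field K] [Finite K]
    [CommRing C] [Algebra K C] [Nontrivial C] (hC : ∀ c : C, c ^ Nat.card K = c) :
    ∃ (B : Type u) (_ : BooleanRing B), Nontrivial B ∧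
      Nonempty (C ≃ₐ[K] LocallyConstant (PrimeSpectrum B) K) := by
  have := totallySeparatedSpace_primeSpectrum_of_forall_pow_eq_self Finite.one_lt_card hC
  obtain ⟨B, instB, hB, ⟨e⟩⟩ := exists_booleanRing_homeomorph (PrimeSpectrum C)
  exact ⟨B, instB, hB, ⟨(locallyConstantEquiv hC).trans (LocallyConstant.congrLeftₐ K e)⟩⟩

section Residue

variable {S A : Type*} [CommRing S] [CommRing A] [Algebra S A]

theorem iInf_map_maximalSpectrum_eq_bot [Ring.KrullDimLE 0 S] [IsReduced A] :
    ⨅ m : MaximalSpectrum S, m.asIdeal.map (algebraMap S A) = ⊥ := by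
  refine eq_bot_iff.2 fun a ha ↦ (nilpotent_iff_mem_prime.2 fun I hI ↦ ?_).eq_zero
  let m : MaximalSpectrum S := ⟨I.under S, inferInstance⟩
  exact Ideal.map_comap_le (Ideal.mem_iInf.1 ha m)

theorem isCoprime_map_maximalSpectrum :
    Pairwise (IsCoprime on fun m : MaximalSpectrum S ↦ m.asIdeal.map (algebraMap S A)) := by
  intro m m' hne
  rw [onFun, Ideal.isCoprime_iff_sup_eq, ← Ideal.map_sup,
    Ideal.isCoprime_iff_sup_eq.1 (MaximalSpectrum.isCoprime_of_ne hne), Ideal.map_top]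

variable (S A) in
/-- The Chinese remainder decomposition of a reduced `S`-algebra over an Artinian ring `S` into its
fibres over the closed points of `S`. -/
noncomputable def equivPiQuotientMapMaximal [IsArtinianRing S] [IsReduced A] :
    A ≃+* ∀ m : MaximalSpectrum S, A ⧸ m.asIdeal.map (algebraMap S A) :=
  (RingEquiv.quotientBot A).symm.trans <|
    (Ideal.quotEquivOfEq iInf_map_maximalSpectrum_eq_bot.symm).trans <|
      Ideal.quotientInfRingEquivPiQuotient _ isCoprime_map_maximalSpectrum

theorem nontrivial_quotient_map_maximal [Algebra.IsIntegral S A] [FaithfulSMul S A]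
    (m : Ideal S) [m.IsMaximal] : Nontrivial (A ⧸ m.map (algebraMap S A)) :=
  Ideal.Quotient.nontrivial_iff.2 <| (Ideal.map_eq_top_iff _
    (FaithfulSMul.algebraMap_injective S A) (algebraMap_isIntegral_iff.2 ‹_›)).not.2
      (Ideal.IsMaximal.ne_top ‹_›)

theorem pow_card_quotient_eq_self [Finite S]
    (hsurj : ∀ I : Ideal A, I.IsPrime → Surjective (algebraMap S (A ⧸ I)))
    (m : Ideal S) [m.IsMaximal] [IsReduced (A ⧸ m.map (algebraMap S A))]
    (c : A ⧸ m.map (algebraMap S A)) :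
    c ^ Nat.card (S ⧸ m) = c := by
  let := Ideal.Quotient.field m
  have : Finite (S ⧸ m) := .of_surjective _ Ideal.Quotient.mk_surjective
  refine pow_card_eq_self_of_algebraMap_quotient_surjective (fun J hJ b ↦ ?_) c
  obtain ⟨c, rfl⟩ := Ideal.Quotient.mk_surjective b
  obtain ⟨a, rfl⟩ := Ideal.Quotient.mk_surjective c
  obtain ⟨s, hs⟩ := hsurj (J.comap (Ideal.Quotient.mk _)) inferInstance (Ideal.Quotient.mk _ a)
  exact ⟨Ideal.Quotient.mk m s, Ideal.Quotient.eq.2 (Ideal.Quotient.eq.1 hs :)⟩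

end Residue

theorem nonempty_ringEquiv_iff_natCard_eq {K L : Type*} [Field K] [Field L] [Finite K] [Finite L] :
    Nonempty (K ≃+* L) ↔ Nat.card K = Nat.card L := by
  cases nonempty_fintype K
  cases nonempty_fintype L
  refine ⟨fun ⟨e⟩ ↦ Nat.card_congr e.toEquiv, fun h ↦ ⟨FiniteField.ringEquivOfCardEq ?_⟩⟩
  simpa only [Nat.card_eq_fintype_card] using h

theorem exists_booleanRing_ringEquiv_pi {T : Type v} [Nonempty T] {K : Type*} {L : T → Type*}
    {C : T → Type u} [Field K] [Finite K] [∀ t, Field (L t)] [∀ t, CommRing (C t)]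
    [∀ t, Nontrivial (C t)] [∀ t, Algebra (L t) (C t)] (e : ∀ t, K ≃+* L t)
    (hC : ∀ t (c : C t), c ^ Nat.card (L t) = c) :
    ∃ (B : Type (max u v)) (_ : BooleanRing B), Nontrivial B ∧
      Nonempty ((∀ t, C t) ≃+* LocallyConstant (PrimeSpectrum B) K) := by
  let (t : T) : Algebra K (C t) := Algebra.compHom (C t) (e t : K →+* L t)
  have : Nontrivial (∀ t, C t) := Pi.nontrivial_at (Classical.arbitrary T)
  obtain ⟨B, instB, hB, ⟨E⟩⟩ := exists_booleanRing_algEquiv_locallyConstant (K := K)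
    (C := ∀ t, C t) fun c ↦ funext fun t ↦ Nat.card_congr (e t).toEquiv ▸ hC t (c t)
  exact ⟨B, instB, hB, ⟨E.toRingEquiv⟩⟩

/-- The partition of the factors of a product of rings according to the value of `f` on the index,
as a ring isomorphism. -/
def piFiberRingEquiv {T I : Type*} (C : T → Type*) [∀ t, NonUnitalNonAssocSemiring (C t)]
    (f : T → I) :
    (∀ t, C t) ≃+* ∀ i, ∀ t : {t // f t = i}, C t where
  toFun c _ t := c t
  invFun c t := c (f t) ⟨t, rfl⟩
  left_inv _ := rfl
  right_inv c := by ext i ⟨t, rfl⟩; rfl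
  map_add' _ _ := rfl
  map_mul' _ _ := rfl

theorem exists_cfgPiece_ringEquiv_pi {T : Type} [Finite T] {K C : T → Type} [∀ t, Field (K t)]
    [∀ t, Finite (K t)] [∀ t, CommRing (C t)] [∀ t, Nontrivial (C t)] [∀ t, Algebra (K t) (C t)]
    (hC : ∀ t (c : C t), c ^ Nat.card (K t) = c) :
    ∃ (n : ℕ) (P : Fin n → CFGPiece),
      (∀ i j, i ≠ j → IsEmpty ((P i).K ≃+* (P j).K)) ∧
      Nonempty ((∀ t, C t) ≃+* ∀ i, LocallyConstant (PrimeSpectrum (P i).B) (P i).K) := by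
  let q := Set.rangeFactorization fun t ↦ Nat.card (K t)
  obtain ⟨n, ⟨e⟩⟩ := Finite.exists_equiv_fin (Set.range fun t ↦ Nat.card (K t))
  have fiber_iff (t t' : T) : e (q t) = e (q t') ↔ Nonempty (K t ≃+* K t') :=
    e.injective.eq_iff.trans <| (Set.rangeFactorization_eq_rangeFactorization_iff t t').trans
      nonempty_ringEquiv_iff_natCard_eq.symm
  choose rep hrep using e.surjective.comp
    (Set.rangeFactorization_surjective (f := fun t ↦ Nat.card (K t)))
  have fiberEquiv (i : Fin n) (t : {t // e (q t) = i}) : Nonempty (K (rep i) ≃+* K t) :=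
    (fiber_iff _ _).1 ((hrep i).trans t.2.symm)
  have (i : Fin n) : Nonempty {t // e (q t) = i} := ⟨⟨rep i, hrep i⟩⟩
  choose B instB hB E using fun i ↦ exists_booleanRing_ringEquiv_pi
    (fun t ↦ (fiberEquiv i t).some) (fun t ↦ hC t)
  refine ⟨n, fun i ↦ ⟨K (rep i), inferInstance, inferInstance, B i, instB i, hB i⟩, ?_, ?_⟩
  · refine fun i j hij ↦ not_nonempty_iff.1 fun h ↦ hij ?_
    rw [← hrep i, ← hrep j]
    exact (fiber_iff _ _).2 h
  · exact ⟨(piFiberRingEquiv C (e ∘ q)).trans (RingEquiv.piCongrRight fun i ↦ (E i).some)⟩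

theorem exists_cfgPiece_ringEquiv_of_forall_pow_eq_self {S A : Type} [CommRing S] [Finite S]
    [CommRing A] [Algebra S A] [FaithfulSMul S A] {n : ℕ} (hn : 1 < n) (hA : ∀ a : A, a ^ n = a)
    (hsurj : ∀ I : Ideal A, I.IsPrime → Surjective (algebraMap S (A ⧸ I))) :
    ∃ (n : ℕ) (P : Fin n → CFGPiece),
      (∀ i j, i ≠ j → IsEmpty ((P i).K ≃+* (P j).K)) ∧
      Nonempty (A ≃+* ∀ i, LocallyConstant (PrimeSpectrum (P i).B) (P i).K) := by
  have := isReduced_of_forall_pow_eq_self hn hA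
  have := isIntegral_of_forall_pow_eq_self S hn hA
  have (J : Ideal A) : IsReduced (A ⧸ J) := isReduced_of_forall_pow_eq_self hn <|
    Ideal.Quotient.mk_surjective.forall.2 fun a ↦ by rw [← map_pow, hA]
  let (m : MaximalSpectrum S) : Field (S ⧸ m.asIdeal) := Ideal.Quotient.field _
  have (m : MaximalSpectrum S) : Finite (S ⧸ m.asIdeal) :=
    .of_surjective _ Ideal.Quotient.mk_surjective
  have (m : MaximalSpectrum S) := nontrivial_quotient_map_maximal (A := A) m.asIdeal
  obtain ⟨n, P, hP, ⟨e⟩⟩ := exists_cfgPiece_ringEquiv_pi fun m : MaximalSpectrum S ↦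
    pow_card_quotient_eq_self hsurj m.asIdeal
  exact ⟨n, P, hP, ⟨(equivPiQuotientMapMaximal S A).trans e⟩⟩

theorem stmt_8 (A : Type) [CommRing A] [IsReduced A]
    (N : ℕ) (x : Fin N → A) (hCFG : ∀ y : A, ∏ i, (y - x i) = 0) :
    ∃ (n : ℕ) (P : Fin n → CFGPiece),
      (∀ i j, i ≠ j → IsEmpty ((P i).K ≃+* (P j).K)) ∧
      Nonempty (A ≃+* ∀ i, LocallyConstant (PrimeSpectrum (P i).B) (P i).K) := by
  have one_lt : 1 < (Fintype.card (Fin N)).factorial + 1 :=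
    Nat.succ_lt_succ (Nat.factorial_pos _)
  have pow_eq := pow_factorial_card_add_one_eq_self hCFG
  let S := Algebra.adjoin ℤ (Set.range x)
  have : Finite S := finite_adjoin_int_of_forall_pow_eq_self one_lt pow_eq (Set.finite_range x)
  refine exists_cfgPiece_ringEquiv_of_forall_pow_eq_self (S := S) one_lt pow_eq fun I _ b ↦ ?_
  obtain ⟨i, rfl⟩ := quotient_mk_comp_surjective hCFG I b
  exact ⟨⟨x i, Algebra.subset_adjoin ⟨i, rfl⟩⟩, rfl⟩
end

section
/- The decomposition of a CFG-ring is unique up to isomorphism and order: if K₁,…,Kₙ are pairwise non-isomorphic finite fields, L₁,…,Lₘ are pairwise non-isomorphic finite fields, B₁,…,Bₙ and C₁,…,Cₘ are nontrivial Boolean rings, and the rings K₁^[B₁] × ⋯ × Kₙ^[Bₙ] and L₁^[C₁] × ⋯ × Lₘ^[Cₘ] are isomorphic, then n = m and there is a permutation σ of {1,…,n} such that Kᵢ is isomorphic to L₍σᵢ₎ and Bᵢ is isomorphic to C₍σᵢ₎ as rings, for every i. -/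
/-!
For a ring `A`, consider the surjections `A → S` onto connected rings whose kernel is generated by
idempotents. For `A = ∏ i, LocallyConstant (X i) (R i)`, with finitely many compact `X i` and
connected `R i`, these are exactly the evaluations at the points of the `X i`. An isomorphism of two
such products therefore matches the isomorphism classes of the `R i` with those of the `S j`, and,
when these classes are distinct, also the factors as ideals. Finally, the idempotents of
`LocallyConstant X R` recover the clopen subsets of `X`, hence `B` when `X` is the spectrum of a
Boolean ring `B`.
-/

theorem exists_equiv_forall_iff {α β : Type*} {r : α → β → Prop}
    (hα : ∀ a, ∃! b, r a b) (hβ : ∀ b, ∃! a, r a b) :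
    ∃ σ : α ≃ β, ∀ a b, r a b ↔ σ a = b := by
  choose σ hσ hσ_unique using hα
  have r_iff (a : α) (b : β) : r a b ↔ σ a = b :=
    ⟨fun h ↦ (hσ_unique a b h).symm, fun h ↦ h ▸ hσ a⟩
  have hσ_bij : Function.Bijective σ := by
    simpa only [Function.bijective_iff_existsUnique, ← r_iff] using hβ
  exact ⟨Equiv.ofBijective σ hσ_bij, r_iff⟩

/-- A connected ring: it is nontrivial and `0` and `1` are its only idempotents. For commutative
rings this says that the prime spectrum is a connected space. -/
class IsConnectedRing (R : Type*) [Ring R] : Prop extends Nontrivial R where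
  eq_zero_or_eq_one_of_isIdempotentElem {e : R} : IsIdempotentElem e → e = 0 ∨ e = 1

instance isConnectedRing_of_isDomain (R : Type*) [Ring R] [IsDomain R] : IsConnectedRing R where
  eq_zero_or_eq_one_of_isIdempotentElem := IsIdempotentElem.iff_eq_zero_or_one.mp

theorem eq_one_of_isIdempotentElem_of_ne_zero {R : Type*} [Ring R] [IsConnectedRing R] {e : R}
    (he : IsIdempotentElem e) (he₀ : e ≠ 0) : e = 1 :=
  (IsConnectedRing.eq_zero_or_eq_one_of_isIdempotentElem he).resolve_left he₀

section BooleanAlgebraOfIdempotents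

/-- A multiplicative isomorphism of commutative rings, restricted to the ordered sets of
idempotents. -/
def idempotentsCongr {R S : Type*} [CommRing R] [CommRing S] (φ : R ≃* S) :
    {e : R // IsIdempotentElem e} ≃o {e : S // IsIdempotentElem e} where
  toEquiv := φ.toEquiv.subtypeEquiv fun e ↦
    ⟨fun he ↦ he.map φ, fun he ↦ by simpa using he.map φ.symm⟩
  map_rel_iff' {a b} := show φ a * φ b = φ a ↔ (a * b : R) = a by
    rw [← map_mul, φ.apply_eq_iff_eq]

/-- The Boolean algebra attached to a Boolean ring, as the clopen algebra of its prime spectrum. -/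
noncomputable def asBoolAlgOrderIsoClopens (B : Type*) [BooleanRing B] :
    AsBoolAlg B ≃o TopologicalSpace.Clopens (PrimeSpectrum B) :=
  let allIdempotent : AsBoolAlg B ≃o {b : B // IsIdempotentElem b} :=
    { toEquiv := ofBoolAlg.trans (Equiv.subtypeUnivEquiv BooleanRing.isIdempotentElem).symm
      map_rel_iff' := ofBoolAlg_mul_ofBoolAlg_eq_left_iff }
  allIdempotent.trans PrimeSpectrum.isIdempotentElemEquivClopens

/-- An order isomorphism of the Boolean algebras attached to two Boolean rings, as an isomorphism
of rings. -/
def ringEquivOfAsBoolAlgOrderIso {B C : Type*} [BooleanRing B] [BooleanRing C]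
    (e : AsBoolAlg B ≃o AsBoolAlg C) : B ≃+* C where
  toEquiv := toBoolAlg.trans (e.toEquiv.trans ofBoolAlg)
  map_mul' a b := congrArg ofBoolAlg (map_inf e (toBoolAlg a) (toBoolAlg b))
  map_add' a b := by
    have h : e (toBoolAlg (a + b)) = symmDiff (e (toBoolAlg a)) (e (toBoolAlg b)) := by
      rw [toBoolAlg_add, map_symmDiff']
    exact (congrArg ofBoolAlg h).trans (ofBoolAlg_symmDiff _ _)

theorem apply_eq_zero_or_eq_one_of_isIdempotentElem {X R : Type*} [TopologicalSpace X] [Ring R]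
    [IsConnectedRing R] {e : LocallyConstant X R} (he : IsIdempotentElem e) (x : X) :
    e x = 0 ∨ e x = 1 :=
  IsConnectedRing.eq_zero_or_eq_one_of_isIdempotentElem (he.map (LocallyConstant.evalRingHom x))

open LocallyConstant in
/-- The idempotents of the ring of locally constant functions on `X` with values in a connected ring
are the characteristic functions of the clopen subsets of `X`. -/
noncomputable def idempotentsOrderIsoClopens (X R : Type*) [TopologicalSpace X] [CommRing R]
    [IsConnectedRing R] :
    {e : LocallyConstant X R // IsIdempotentElem e} ≃o TopologicalSpace.Clopens X where
  toFun e := ⟨e.1 ⁻¹' {1}, e.1.isLocallyConstant.isClopen_fiber 1⟩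
  invFun U := ⟨charFn R U.isClopen, by
    ext x; by_cases hx : x ∈ U <;> simp [coe_charFn, hx]⟩
  left_inv := by
    rintro ⟨e, he⟩
    ext x
    change charFn R (e.isLocallyConstant.isClopen_fiber 1) x = e x
    rcases apply_eq_zero_or_eq_one_of_isIdempotentElem he x with hx | hx
    · rw [hx, charFn_eq_zero]
      exact fun hx_one ↦ zero_ne_one (hx.symm.trans hx_one)
    · rw [hx, charFn_eq_one]
      exact hx
  right_inv U := by ext x; exact charFn_eq_one R x U.isClopen
  map_rel_iff' := by
    rintro ⟨e, he⟩ ⟨f, hf⟩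
    change (∀ x, e x = 1 → f x = 1) ↔ e * f = e
    rw [LocallyConstant.ext_iff]
    refine forall_congr' fun x ↦ ?_
    rcases apply_eq_zero_or_eq_one_of_isIdempotentElem he x with hx | hx <;> simp [hx]

/-- The multiplicative monoid of the ring of locally constant functions on `X` determines the
ordered set of clopen subsets of `X`. -/
noncomputable def clopensOrderIsoOfMulEquiv {X Y R S : Type*} [TopologicalSpace X]
    [TopologicalSpace Y] [CommRing R] [IsConnectedRing R] [CommRing S] [IsConnectedRing S]
    (φ : LocallyConstant X R ≃* LocallyConstant Y S) :
    TopologicalSpace.Clopens X ≃o TopologicalSpace.Clopens Y :=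
  (idempotentsOrderIsoClopens X R).symm.trans
    ((idempotentsCongr φ).trans (idempotentsOrderIsoClopens Y S))

end BooleanAlgebraOfIdempotents

section Pi

variable {ι κ : Type*} [DecidableEq ι] {A : ι → Type*} {C : κ → Type*}
  [∀ i, Semiring (A i)] [∀ j, Semiring (C j)]

theorem isIdempotentElem_single_one (i : ι) : IsIdempotentElem (Pi.single i 1 : ∀ i, A i) := by
  rw [IsIdempotentElem, ← Pi.single_mul, one_mul]

theorem single_one_mul (i : ι) (a : ∀ i, A i) : Pi.single i 1 * a = Pi.single i (a i) := by
  rw [← Pi.single_mul_left, one_mul]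

theorem sum_map_single_one [Fintype ι] {S : Type*} [Semiring S] (φ : (∀ i, A i) →+* S) :
    ∑ i, φ (Pi.single i 1) = 1 := by
  rw [← map_sum, ← map_one φ]
  exact congrArg φ (Finset.univ_sum_single 1)

theorem exists_map_single_one_ne_zero [Finite ι] {S : Type*} [Semiring S] [Nontrivial S]
    (φ : (∀ i, A i) →+* S) : ∃ i, φ (Pi.single i 1) ≠ 0 := by
  have := Fintype.ofFinite ι
  by_contra! hφ
  exact one_ne_zero ((sum_map_single_one φ).symm.trans (Finset.sum_eq_zero fun i _ ↦ hφ i))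

theorem map_single_one_eq_single_one [Finite ι] [DecidableEq κ] (φ : (∀ i, A i) →+* ∀ j, C j)
    {σ : ι → κ} (hσ : Function.Injective σ) (hφ : ∀ i j, φ (Pi.single i 1) j ≠ 0 → σ i = j)
    (i : ι) : φ (Pi.single i 1) = Pi.single (σ i) 1 := by
  have := Fintype.ofFinite ι
  have apply_eq_zero {k : ι} {j : κ} (hkj : σ k ≠ j) : φ (Pi.single k 1) j = 0 :=
    not_imp_comm.mp (hφ k j) hkj
  ext j
  by_cases hj : σ i = j
  · subst hj
    calc φ (Pi.single i 1) (σ i) = ∑ k, φ (Pi.single k 1) (σ i) :=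
          (Finset.sum_eq_single i (fun k _ hk ↦ apply_eq_zero (hσ.ne hk)) (by simp)).symm
      _ = 1 := sum_map_single_one ((Pi.evalRingHom C (σ i)).comp φ)
      _ = Pi.single (σ i) (1 : C (σ i)) (σ i) := (Pi.single_eq_same _ _).symm
  · rw [apply_eq_zero hj, Pi.single_eq_of_ne' hj]

theorem map_single_apply_of_map_single_one [DecidableEq κ] (φ : (∀ i, A i) →+* ∀ j, C j)
    {i : ι} {j : κ} (hφ : φ (Pi.single i 1) = Pi.single j 1) (a : ∀ i, A i) :
    φ (Pi.single i (a i)) j = φ a j := by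
  rw [← single_one_mul, map_mul, hφ, single_one_mul, Pi.single_eq_same]

/-- An isomorphism of products which maps the `i`-th factor onto the `j`-th one, as an isomorphism
of these factors. -/
def factorRingEquiv [DecidableEq κ] (φ : (∀ i, A i) ≃+* ∀ j, C j) {i : ι} {j : κ}
    (hφ : φ (Pi.single i 1) = Pi.single j 1) : A i ≃+* C j where
  toFun a := φ (Pi.single i a) j
  invFun c := φ.symm (Pi.single j c) i
  left_inv a := by
    have hφ_symm : φ.symm (Pi.single j 1) = Pi.single i 1 := φ.symm_apply_eq.mpr hφ.symm
    have h := map_single_apply_of_map_single_one (φ.symm : (∀ j, C j) →+* ∀ i, A i) hφ_symm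
      (φ (Pi.single i a))
    simpa using h
  right_inv c := by
    have h := map_single_apply_of_map_single_one (φ : (∀ i, A i) →+* ∀ j, C j) hφ
      (φ.symm (Pi.single j c))
    simpa using h
  map_mul' a b := by rw [Pi.single_mul, map_mul, Pi.mul_apply]
  map_add' a b := by rw [Pi.single_add, map_add, Pi.add_apply]

end Pi

theorem map_eq_zero_of_map_eq_one_of_mul_eq_zero {A S : Type*} [Semiring A] [Semiring S]
    (g : A →+* S) {e a : A} (hge : g e = 1) (hea : e * a = 0) : g a = 0 := by
  rw [← one_mul (g a), ← hge, ← map_mul, hea, map_zero]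

/-- A ring homomorphism `g : A → S` which is surjective and whose kernel is generated by
idempotents, the latter expressed by complementary idempotents `e`: each element of the kernel is
killed by an idempotent `e` which `g` maps to `1`. When `S` is connected, `S` is then the stalk of
the Pierce sheaf of `A` at the point of the Boolean spectrum given by the kernel. -/
structure IsPierceStalk {A S : Type*} [CommRing A] [CommRing S] (g : A →+* S) : Prop where
  surjective : Function.Surjective g
  exists_idempotent {a : A} : g a = 0 → ∃ e, IsIdempotentElem e ∧ g e = 1 ∧ e * a = 0

section PierceStalk

variable {A S T : Type*} [CommRing A] [CommRing S] [CommRing T]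

theorem isPierceStalk_ringEquiv (φ : A ≃+* S) : IsPierceStalk (φ : A →+* S) where
  surjective := φ.surjective
  exists_idempotent {a} ha := ⟨1, .one, map_one _, by simpa using ha⟩

theorem IsPierceStalk.exists_idempotent_lift {g : A →+* S} (hg : IsPierceStalk g) {e : S}
    (he : IsIdempotentElem e) : ∃ e', IsIdempotentElem e' ∧ g e' = e := by
  obtain ⟨a, rfl⟩ := hg.surjective e
  have hga : g (a * a - a) = 0 := by rw [map_sub, map_mul, he.eq, sub_self]
  obtain ⟨u, hu, hgu, hua⟩ := hg.exists_idempotent hga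
  have hua_idem : u * a * (u * a) = u * a := by
    linear_combination (a * a) * hu.eq + hua
  exact ⟨u * a, hua_idem, by rw [map_mul, hgu, one_mul]⟩

theorem IsPierceStalk.comp {h : S →+* T} {g : A →+* S} (hh : IsPierceStalk h)
    (hg : IsPierceStalk g) : IsPierceStalk (h.comp g) where
  surjective := hh.surjective.comp hg.surjective
  exists_idempotent {a} ha := by
    obtain ⟨e, he, hhe, hea⟩ := hh.exists_idempotent ha
    obtain ⟨e', he', rfl⟩ := hg.exists_idempotent_lift he
    obtain ⟨u, hu, hgu, hua⟩ := hg.exists_idempotent (a := e' * a) (by rw [map_mul, hea])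
    refine ⟨u * e', hu.mul he', ?_, by rw [mul_assoc, hua]⟩
    rw [RingHom.comp_apply, map_mul, hgu, one_mul, hhe]

theorem IsPierceStalk.of_comp {h : S →+* T} {g : A →+* S} (hhg : IsPierceStalk (h.comp g))
    (hg : Function.Surjective g) : IsPierceStalk h where
  surjective := .of_comp hhg.surjective
  exists_idempotent {s} hs := by
    obtain ⟨a, rfl⟩ := hg s
    obtain ⟨e, he, hge, hea⟩ := hhg.exists_idempotent hs
    exact ⟨g e, he.map g, hge, by rw [← map_mul, hea, map_zero]⟩

theorem IsPierceStalk.ker_eq_of_le [IsConnectedRing T] [Nontrivial S] {g : A →+* S} {h : A →+* T}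
    (hg : IsPierceStalk g) (hle : RingHom.ker h ≤ RingHom.ker g) :
    RingHom.ker h = RingHom.ker g := by
  refine hle.antisymm fun a ha ↦ ?_
  obtain ⟨e, he, hge, hea⟩ := hg.exists_idempotent ha
  have he₀ : h e ≠ 0 := fun h₀ ↦ one_ne_zero (hge.symm.trans (hle h₀))
  have he₁ : h e = 1 := eq_one_of_isIdempotentElem_of_ne_zero (he.map h) he₀
  exact map_eq_zero_of_map_eq_one_of_mul_eq_zero h he₁ hea

theorem isPierceStalk_piEvalRingHom {ι : Type*} (R : ι → Type*) [∀ i, CommRing (R i)] (i : ι) :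
    IsPierceStalk (Pi.evalRingHom R i) where
  surjective := Function.surjective_eval i
  exists_idempotent {a} ha := by
    classical
    have ha : a i = 0 := ha
    exact ⟨Pi.single i 1, isIdempotentElem_single_one i, Pi.single_eq_same i 1,
      by rw [single_one_mul, ha, Pi.single_zero]⟩

theorem exists_isPierceStalk_of_map_single_one_ne_zero {ι : Type*} [DecidableEq ι]
    {R : ι → Type*} [∀ i, CommRing (R i)] [IsConnectedRing S] {g : (∀ i, R i) →+* S}
    (hg : IsPierceStalk g) {i : ι} (hgi : g (Pi.single i 1) ≠ 0) :
    ∃ g' : R i →+* S, IsPierceStalk g' := by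
  have hgi₁ : g (Pi.single i 1) = 1 :=
    eq_one_of_isIdempotentElem_of_ne_zero ((isIdempotentElem_single_one i).map g) hgi
  have ker_le : RingHom.ker (Pi.evalRingHom R i) ≤ RingHom.ker g := fun a (ha : a i = 0) ↦
    map_eq_zero_of_map_eq_one_of_mul_eq_zero g hgi₁ (by rw [single_one_mul, ha, Pi.single_zero])
  have eval_surjective := (isPierceStalk_piEvalRingHom R i).surjective
  let g' : R i →+* S := RingHom.liftOfSurjective _ eval_surjective ⟨g, ker_le⟩
  have g'_comp : g'.comp (Pi.evalRingHom R i) = g := RingHom.liftOfRightInverse_comp _ _ _ _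
  exact ⟨g', .of_comp (g'_comp ▸ hg) eval_surjective⟩

end PierceStalk

section LocallyConstant

variable {X R S : Type*} [TopologicalSpace X]

theorem exists_idempotent_mul_eq_zero [Ring R] (f : LocallyConstant X R) :
    ∃ e : LocallyConstant X R, IsIdempotentElem e ∧ (∀ x, f x = 0 → e x = 1) ∧ e * f = 0 := by
  classical
  let e : LocallyConstant X R := f.map fun r ↦ if r = 0 then 1 else 0
  refine ⟨e, ?_, fun x hx ↦ by simp [e, hx], ?_⟩
  · ext x
    by_cases hx : f x = 0 <;> simp [e, hx]
  · ext x
    by_cases hx : f x = 0 <;> simp [e, hx]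

theorem isPierceStalk_evalRingHom [CommRing R] (x : X) :
    IsPierceStalk (LocallyConstant.evalRingHom x : LocallyConstant X R →+* R) where
  surjective r := ⟨LocallyConstant.const X r, rfl⟩
  exists_idempotent {f} hf := by
    obtain ⟨e, he, he_one, hef⟩ := exists_idempotent_mul_eq_zero f
    exact ⟨e, he, he_one x hf, hef⟩

-- If every point of `X` had a neighbourhood on which some element of `ker g` is `1`, compactness
-- would put `1` itself into `ker g`.
theorem exists_ker_evalRingHom_le_ker [CompactSpace X] [Ring R] [Ring S] [IsConnectedRing S]
    (g : LocallyConstant X R →+* S) :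
    ∃ x : X, RingHom.ker (LocallyConstant.evalRingHom x) ≤ RingHom.ker g := by
  by_contra! hker
  have exists_eq_one_on_univ : ∃ e, g e = 0 ∧ ∀ x ∈ Set.univ, e x = 1 := by
    refine isCompact_univ.induction_on (p := fun s ↦ ∃ e, g e = 0 ∧ ∀ x ∈ s, e x = 1)
      ⟨0, map_zero g, by simp⟩ ?_ ?_ fun x _ ↦ ?_
    · rintro s t hst ⟨e, hge, he⟩
      exact ⟨e, hge, fun x hx ↦ he x (hst hx)⟩
    · rintro s t ⟨e, hge, he⟩ ⟨f, hgf, hf⟩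
      refine ⟨e + f - e * f, by simp [hge, hgf], ?_⟩
      rintro x (hx | hx)
      · change e x + f x - e x * f x = 1
        rw [he x hx, one_mul, add_sub_cancel_right]
      · change e x + f x - e x * f x = 1
        rw [hf x hx, mul_one, add_sub_cancel_left]
    · obtain ⟨f, hfx, hgf⟩ := SetLike.not_le_iff_exists.mp (hker x)
      obtain ⟨e, he, he_one, hef⟩ := exists_idempotent_mul_eq_zero f
      have hge : g e = 0 := by
        by_contra hge₀
        have hge₁ : g e = 1 := eq_one_of_isIdempotentElem_of_ne_zero (he.map g) hge₀
        exact hgf (map_eq_zero_of_map_eq_one_of_mul_eq_zero g hge₁ hef)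
      exact ⟨f ⁻¹' {0}, mem_nhdsWithin_of_mem_nhds
        ((f.isLocallyConstant.isOpen_fiber 0).mem_nhds hfx), e, hge, he_one⟩
  obtain ⟨e, hge, he⟩ := exists_eq_one_on_univ
  have he_one : e = 1 := LocallyConstant.ext fun x ↦ he x trivial
  exact one_ne_zero (by rw [← map_one g, ← he_one, hge])

theorem IsPierceStalk.nonempty_ringEquiv [CompactSpace X] [CommRing R] [IsConnectedRing R]
    [CommRing S] [IsConnectedRing S] {g : LocallyConstant X R →+* S} (hg : IsPierceStalk g) :
    Nonempty (R ≃+* S) := by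
  obtain ⟨x, hx⟩ := exists_ker_evalRingHom_le_ker g
  exact ⟨(RingHom.quotientKerEquivOfSurjective (isPierceStalk_evalRingHom x).surjective).symm.trans
    ((Ideal.quotEquivOfEq (hg.ker_eq_of_le hx)).trans
      (RingHom.quotientKerEquivOfSurjective hg.surjective))⟩

end LocallyConstant

section PiLocallyConstant

open TopologicalSpace (Clopens)

variable {ι κ : Type*} {X R : ι → Type*} {Y S : κ → Type*}
  [∀ i, TopologicalSpace (X i)] [∀ i, CompactSpace (X i)]
  [∀ i, CommRing (R i)] [∀ i, IsConnectedRing (R i)]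
  [∀ j, TopologicalSpace (Y j)] [∀ j, CommRing (S j)] [∀ j, IsConnectedRing (S j)]

theorem nonempty_ringEquiv_of_map_single_one_ne_zero [DecidableEq ι]
    (φ : (∀ i, LocallyConstant (X i) (R i)) ≃+* ∀ j, LocallyConstant (Y j) (S j)) {i : ι} {j : κ}
    (hφ : φ (Pi.single i 1) j ≠ 0) : Nonempty (R i ≃+* S j) := by
  obtain ⟨y, hy⟩ : ∃ y, φ (Pi.single i 1) j y ≠ 0 := by
    by_contra! h
    exact hφ (LocallyConstant.ext h)
  have eval_stalk := (isPierceStalk_evalRingHom y).comp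
    ((isPierceStalk_piEvalRingHom (fun j ↦ LocallyConstant (Y j) (S j)) j).comp
      (isPierceStalk_ringEquiv φ))
  obtain ⟨g, hg⟩ := exists_isPierceStalk_of_map_single_one_ne_zero eval_stalk hy
  exact hg.nonempty_ringEquiv

theorem exists_nonempty_ringEquiv_of_pi_locallyConstant [Finite ι]
    (φ : (∀ i, LocallyConstant (X i) (R i)) ≃+* ∀ j, LocallyConstant (Y j) (S j)) (j : κ)
    [Nonempty (Y j)] : ∃ i, Nonempty (R i ≃+* S j) := by
  classical
  have : Nontrivial (LocallyConstant (Y j) (S j)) :=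
    (LocallyConstant.evalRingHom (Classical.arbitrary (Y j))).domain_nontrivial
  obtain ⟨i, hi⟩ := exists_map_single_one_ne_zero
    ((Pi.evalRingHom (fun j ↦ LocallyConstant (Y j) (S j)) j).comp φ.toRingHom)
  exact ⟨i, nonempty_ringEquiv_of_map_single_one_ne_zero φ hi⟩

theorem exists_equiv_of_pi_locallyConstant_ringEquiv [Finite ι]
    [∀ i, Nonempty (X i)] [∀ j, Nonempty (Y j)] [∀ j, CompactSpace (Y j)]
    (hR : Pairwise fun i j ↦ IsEmpty (R i ≃+* R j)) (hS : Pairwise fun i j ↦ IsEmpty (S i ≃+* S j))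
    (φ : (∀ i, LocallyConstant (X i) (R i)) ≃+* ∀ j, LocallyConstant (Y j) (S j)) :
    ∃ σ : ι ≃ κ, ∀ i,
      Nonempty (R i ≃+* S (σ i)) ∧ Nonempty (Clopens (X i) ≃o Clopens (Y (σ i))) := by
  classical
  have finite_κ : Finite κ := by
    choose τ hτ using fun j ↦ exists_nonempty_ringEquiv_of_pi_locallyConstant φ j
    refine Finite.of_injective τ fun j k hjk ↦ hS.eq fun h ↦ ?_
    obtain ⟨e⟩ := hτ j
    obtain ⟨f⟩ := hjk ▸ hτ k
    exact h.false (e.symm.trans f)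
  have existsUnique_S (i : ι) : ∃! j, Nonempty (R i ≃+* S j) := by
    obtain ⟨j, ⟨e⟩⟩ := exists_nonempty_ringEquiv_of_pi_locallyConstant φ.symm i
    exact ⟨j, ⟨e.symm⟩, fun k ⟨f⟩ ↦ hS.eq fun h ↦ h.false (f.symm.trans e.symm)⟩
  have existsUnique_R (j : κ) : ∃! i, Nonempty (R i ≃+* S j) := by
    obtain ⟨i, ⟨e⟩⟩ := exists_nonempty_ringEquiv_of_pi_locallyConstant φ j
    exact ⟨i, ⟨e⟩, fun k ⟨f⟩ ↦ hR.eq fun h ↦ h.false (f.trans e.symm)⟩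
  obtain ⟨σ, hσ⟩ := exists_equiv_forall_iff existsUnique_S existsUnique_R
  have φ_single (i : ι) : φ (Pi.single i 1) = Pi.single (σ i) 1 :=
    map_single_one_eq_single_one φ.toRingHom σ.injective
      (fun i j hij ↦ (hσ i j).mp (nonempty_ringEquiv_of_map_single_one_ne_zero φ hij)) i
  exact ⟨σ, fun i ↦ ⟨(hσ i (σ i)).mpr rfl,
    ⟨clopensOrderIsoOfMulEquiv (factorRingEquiv φ (φ_single i)).toMulEquiv⟩⟩⟩

end PiLocallyConstant

theorem stmt_9_general {ι κ : Type*} [Finite ι] {K B : ι → Type*} {L C : κ → Type*}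
    [∀ i, CommRing (K i)] [∀ i, IsConnectedRing (K i)]
    [∀ i, BooleanRing (B i)] [∀ i, Nontrivial (B i)]
    [∀ j, CommRing (L j)] [∀ j, IsConnectedRing (L j)]
    [∀ j, BooleanRing (C j)] [∀ j, Nontrivial (C j)]
    (hK : Pairwise fun i j ↦ IsEmpty (K i ≃+* K j)) (hL : Pairwise fun i j ↦ IsEmpty (L i ≃+* L j))
    (φ : (∀ i, LocallyConstant (PrimeSpectrum (B i)) (K i)) ≃+*
      ∀ j, LocallyConstant (PrimeSpectrum (C j)) (L j)) :
    ∃ σ : ι ≃ κ, ∀ i, Nonempty (K i ≃+* L (σ i)) ∧ Nonempty (B i ≃+* C (σ i)) := by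
  obtain ⟨σ, hσ⟩ := exists_equiv_of_pi_locallyConstant_ringEquiv hK hL φ
  exact ⟨σ, fun i ↦ (hσ i).imp_right fun ⟨e⟩ ↦ ⟨ringEquivOfAsBoolAlgOrderIso
    ((asBoolAlgOrderIsoClopens _).trans (e.trans (asBoolAlgOrderIsoClopens _).symm))⟩⟩

theorem stmt_9 (n m : ℕ) (P : Fin n → CFGPiece) (Q : Fin m → CFGPiece)
    (hP : ∀ i j, i ≠ j → IsEmpty ((P i).K ≃+* (P j).K))
    (hQ : ∀ i j, i ≠ j → IsEmpty ((Q i).K ≃+* (Q j).K))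
    (h : Nonempty ((∀ i, LocallyConstant (PrimeSpectrum (P i).B) (P i).K) ≃+*
      (∀ j, LocallyConstant (PrimeSpectrum (Q j).B) (Q j).K))) :
    n = m ∧ ∃ σ : Fin n ≃ Fin m,
      ∀ i, Nonempty ((P i).K ≃+* (Q (σ i)).K) ∧ Nonempty ((P i).B ≃+* (Q (σ i)).B) := by
  obtain ⟨σ, hσ⟩ := stmt_9_general hP hQ h.some
  exact ⟨Fin.equiv_iff_eq.mp ⟨σ⟩, σ, hσ⟩
end

section
/- Let A be a commutative von Neumann regular ring. The following are equivalent: (i) there exists a polynomial F ∈ A[X] such that for every x ∈ A the element F(x) is idempotent and generates the same principal ideal as x (i.e., F(x)A = xA); (ii) there exists a natural number n such that for every prime ideal p of A the quotient A/p is finite with |A/p| < n. -/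
/-!
If `F` sends every `x` to an idempotent generator of `xA`, then `X * (F - 1)` vanishes at every
point of `A`, and its coefficient at `X` is `F(0) - 1 = -1`. Hence it stays nonzero in `(A ⧸ p)[X]`
for each prime `p`, so the domain `A ⧸ p` has at most `deg (X * (F - 1))` elements. Moreover `A` is
reduced, because `x` is a multiple of `x ^ 2`.

Conversely, if all the `A ⧸ p` are finite with at most `n` elements, then `x ^ (n! + 1) = x` holds
modulo every prime, hence in `A` when `A` is reduced, and `F = X ^ n!` works.
-/

open Polynomial
open scoped Nat

theorem isReduced_of_forall_exists_eq_sq_mul {M : Type*} [MonoidWithZero M]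
    (h : ∀ a : M, ∃ b : M, a = a ^ 2 * b) : IsReduced M := by
  rw [isReduced_iff_pow_one_lt 2 one_lt_two]
  intro a ha
  obtain ⟨b, hb⟩ := h a
  rw [hb, ha, zero_mul]

theorem mul_eq_left_of_mem_span_idempotent {R : Type*} [CommSemiring R] {e x : R}
    (he : IsIdempotentElem e) (hx : x ∈ Ideal.span {e}) : x * e = x := by
  obtain ⟨c, rfl⟩ := Ideal.mem_span_singleton'.mp hx
  exact he.mul_mul_self c

theorem exists_eq_sq_mul_of_span_idempotent_eq {R : Type*} [CommSemiring R] {e x : R}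
    (he : IsIdempotentElem e) (hspan : Ideal.span {e} = Ideal.span {x}) :
    ∃ b : R, x = x ^ 2 * b := by
  have hxe : x * e = x :=
    mul_eq_left_of_mem_span_idempotent he (hspan ▸ Ideal.mem_span_singleton_self x)
  obtain ⟨b, rfl⟩ : x ∣ e :=
    Ideal.mem_span_singleton.mp (hspan ▸ Ideal.mem_span_singleton_self e)
  exact ⟨b, by rw [sq, mul_assoc, hxe]⟩

theorem isIdempotentElem_pow_of_pow_succ_eq_self {M : Type*} [Monoid M] {x : M} {k : ℕ}
    (hk : k ≠ 0) (hx : x ^ (k + 1) = x) : IsIdempotentElem (x ^ k) := by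
  obtain ⟨m, rfl⟩ := Nat.exists_eq_succ_of_ne_zero hk
  calc x ^ (m + 1) * x ^ (m + 1) = x ^ (m + 1 + 1) * x ^ m := by
        rw [← pow_add, ← pow_add, show m + 1 + (m + 1) = m + 1 + 1 + m by lia]
    _ = x ^ (m + 1) := by rw [hx, pow_succ']

theorem span_pow_eq_span_of_pow_succ_eq_self {R : Type*} [CommSemiring R] {x : R} {k : ℕ}
    (hk : k ≠ 0) (hx : x ^ (k + 1) = x) : Ideal.span {x ^ k} = Ideal.span {x} := by
  apply le_antisymm <;> rw [Ideal.span_singleton_le_span_singleton]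
  · exact dvd_pow_self x hk
  · exact ⟨x, by rw [← pow_succ, hx]⟩

theorem finite_and_card_le_natDegree_of_forall_eval_eq_zero {R : Type*} [CommRing R] [IsDomain R]
    {f : R[X]} (hf : f ≠ 0) (hzero : ∀ r, f.eval r = 0) :
    Finite R ∧ Nat.card R ≤ f.natDegree := by
  have hcard : Cardinal.mk R ≤ f.natDegree :=
    not_lt.mp fun h ↦ hf (eq_zero_of_forall_eval_zero_of_natDegree_lt_card f hzero h)
  have hfin : Finite R :=
    Cardinal.lt_aleph0_iff_finite.mp (hcard.trans_lt Cardinal.natCast_lt_aleph0)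
  exact ⟨hfin, by rwa [← Nat.cast_card, Nat.cast_le] at hcard⟩

theorem finite_and_card_le_natDegree_of_surjective {R S : Type*} [Semiring R] [CommRing S]
    [IsDomain S] {g : R →+* S} (hg : Function.Surjective g) {f : R[X]} (hf : f.map g ≠ 0)
    (hzero : ∀ r, f.eval r = 0) : Finite S ∧ Nat.card S ≤ f.natDegree := by
  have hmap_zero (s : S) : (f.map g).eval s = 0 := by
    obtain ⟨r, rfl⟩ := hg s
    rw [eval_map_apply, hzero, map_zero]
  obtain ⟨hfin, hcard⟩ := finite_and_card_le_natDegree_of_forall_eval_eq_zero hf hmap_zero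
  exact ⟨hfin, hcard.trans natDegree_map_le⟩

theorem finite_and_card_quotient_le_natDegree {R : Type*} [CommRing R] {F : R[X]}
    (hF₀ : F.eval 0 = 0) (hF : ∀ x, x * F.eval x = x) (p : Ideal R) [p.IsPrime] :
    Finite (R ⧸ p) ∧ Nat.card (R ⧸ p) ≤ (X * (F - 1)).natDegree := by
  refine finite_and_card_le_natDegree_of_surjective (Ideal.Quotient.mk_surjective (I := p)) ?_ ?_
  · intro hmap
    have hcoeff : (X * (F - 1)).coeff 1 = -1 := by
      rw [coeff_X_mul, coeff_zero_eq_eval_zero, eval_sub, hF₀, eval_one, zero_sub]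
    have hneg : Ideal.Quotient.mk p (-1) = 0 := by rw [← hcoeff, ← coeff_map, hmap, coeff_zero]
    simp at hneg
  · intro x
    rw [eval_mul, eval_X, eval_sub, eval_one, mul_sub, hF, mul_one, sub_self]

theorem pow_factorial_eq_one_of_card_le {G : Type*} [Group G] [Finite G] {n : ℕ}
    (hn : Nat.card G ≤ n) (g : G) : g ^ n ! = 1 :=
  orderOf_dvd_iff_pow_eq_one.mp <|
    (orderOf_dvd_natCard g).trans (Nat.dvd_factorial Nat.card_pos hn)

theorem pow_factorial_succ_eq_self_of_card_le {M : Type*} [MonoidWithZero M]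
    [IsLeftCancelMulZero M] [Finite M] {n : ℕ} (hn : Nat.card M ≤ n) (x : M) :
    x ^ (n ! + 1) = x := by
  obtain rfl | hx := eq_or_ne x 0
  · exact zero_pow n !.succ_ne_zero
  · obtain ⟨u, rfl⟩ : IsUnit x :=
      (IsLeftCancelMulZero.mul_left_cancel_of_ne_zero hx).isUnit_of_finite
    have hu : u ^ n ! = 1 := pow_factorial_eq_one_of_card_le
      ((Nat.card_le_card_of_injective _ Units.val_injective).trans hn) u
    rw [← Units.val_pow_eq_pow_val, pow_succ, hu, one_mul]

theorem eq_of_forall_prime_quotient_mk_eq {R : Type*} [CommRing R] [IsReduced R] {a b : R}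
    (h : ∀ p : Ideal R, p.IsPrime → Ideal.Quotient.mk p a = Ideal.Quotient.mk p b) : a = b :=
  sub_eq_zero.mp <| IsNilpotent.eq_zero <| nilpotent_iff_mem_prime.mpr fun p hp ↦
    Ideal.Quotient.eq.mp (h p hp)

theorem pow_factorial_succ_eq_self_of_card_quotient_le {R : Type*} [CommRing R] [IsReduced R]
    {n : ℕ} (hn : ∀ p : Ideal R, p.IsPrime → Finite (R ⧸ p) ∧ Nat.card (R ⧸ p) ≤ n) (x : R) :
    x ^ (n ! + 1) = x := by
  refine eq_of_forall_prime_quotient_mk_eq fun p hp ↦ ?_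
  obtain ⟨_, hcard⟩ := hn p hp
  rw [map_pow, pow_factorial_succ_eq_self_of_card_le hcard]

theorem stmt_11_general (A : Type*) [CommRing A] :
    (∃ F : Polynomial A, ∀ x : A, IsIdempotentElem (F.eval x) ∧
        Ideal.span {F.eval x} = Ideal.span {x}) ↔
      IsReduced A ∧ ∃ n : ℕ, ∀ (p : Ideal A), p.IsPrime →
        Finite (A ⧸ p) ∧ Nat.card (A ⧸ p) < n := by
  constructor
  · rintro ⟨F, hF⟩
    have hF₀ : F.eval 0 = 0 := by simpa using (hF 0).2
    have hmul (x : A) : x * F.eval x = x :=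
      mul_eq_left_of_mem_span_idempotent (hF x).1 ((hF x).2 ▸ Ideal.mem_span_singleton_self x)
    refine ⟨isReduced_of_forall_exists_eq_sq_mul fun x ↦
      exists_eq_sq_mul_of_span_idempotent_eq (hF x).1 (hF x).2, (X * (F - 1)).natDegree + 1, ?_⟩
    intro p _
    simpa only [Nat.lt_succ_iff] using finite_and_card_quotient_le_natDegree hF₀ hmul p
  · rintro ⟨_, n, hn⟩
    refine ⟨X ^ n !, fun x ↦ ?_⟩
    have hx : x ^ (n ! + 1) = x :=
      pow_factorial_succ_eq_self_of_card_quotient_le (fun p hp ↦ (hn p hp).imp_right le_of_lt) x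
    rw [eval_pow, eval_X]
    exact ⟨isIdempotentElem_pow_of_pow_succ_eq_self n.factorial_ne_zero hx,
      span_pow_eq_span_of_pow_succ_eq_self n.factorial_ne_zero hx⟩

theorem stmt_11 (A : Type*) [CommRing A]
    (hreg : ∀ a : A, ∃ b : A, a = a ^ 2 * b) :
    (∃ F : Polynomial A, ∀ x : A, IsIdempotentElem (F.eval x) ∧
        Ideal.span {F.eval x} = Ideal.span {x}) ↔
      (∃ n : ℕ, ∀ (p : Ideal A), p.IsPrime →
        Finite (A ⧸ p) ∧ Nat.card (A ⧸ p) < n) :=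
  (stmt_11_general A).trans (and_iff_right (isReduced_of_forall_exists_eq_sq_mul hreg))
end

section
/- Let A be a commutative von Neumann regular ring, a₁,…,aₙ a complete family of orthogonal idempotents of A, x₁,…,xₙ ∈ A, and b₁,…,bₙ idempotents of A with bᵢA = xᵢA for each i. Then ∑ᵢ aᵢbᵢ is an idempotent and (∑ᵢ aᵢbᵢ)A = (∑ᵢ aᵢxᵢ)A; that is, the map e sending each element to its associated idempotent commutes with convex combinations. -/
/-!
For orthogonal idempotents `aᵢ`, the cross terms in `(∑ᵢ aᵢuᵢ)(∑ⱼ aⱼvⱼ)` vanish, so the map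
`u ↦ ∑ᵢ aᵢuᵢ` from tuples to elements is multiplicative. It therefore preserves idempotents and
divisibility, and two principal ideals coincide exactly when their generators divide each other.
-/

section OrthogonalIdempotents

variable {A ι : Type*} [CommSemiring A] [Fintype ι] {a : ι → A}

/-- The combination `u ↦ ∑ i, a i * u i` of a tuple, with orthogonal idempotents as weights.
It is bundled as a multiplicative homomorphism to inherit the preservation of idempotents and of
divisibility; it sends `1` to `∑ i, a i`, so in general it is not a monoid homomorphism. -/
def orthogonalCombination (ha : OrthogonalIdempotents a) : (ι → A) →ₙ* A where
  toFun u := ∑ i, a i * u i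
  map_mul' u v := by
    classical
    calc
      ∑ i, a i * (u i * v i) = ∑ i, ∑ j, a i * a j * (u i * v j) := by
        simp only [ha.mul_eq, ite_mul, zero_mul, Finset.sum_ite_eq, Finset.mem_univ, ↓reduceIte]
      _ = (∑ i, a i * u i) * ∑ j, a j * v j := by
        simp only [Finset.sum_mul_sum, mul_mul_mul_comm]

theorem isIdempotentElem_sum_mul (ha : OrthogonalIdempotents a) {b : ι → A}
    (hb : ∀ i, IsIdempotentElem (b i)) : IsIdempotentElem (∑ i, a i * b i) :=
  IsIdempotentElem.map (e := b) (funext hb) (orthogonalCombination ha)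

theorem sum_mul_dvd_sum_mul (ha : OrthogonalIdempotents a) {u v : ι → A}
    (h : ∀ i, u i ∣ v i) : ∑ i, a i * u i ∣ ∑ i, a i * v i :=
  map_dvd (orthogonalCombination ha) (pi_dvd_iff.2 h)

theorem span_singleton_sum_mul_le (ha : OrthogonalIdempotents a) {u v : ι → A}
    (h : ∀ i, Ideal.span {u i} ≤ Ideal.span {v i}) :
    Ideal.span {∑ i, a i * u i} ≤ Ideal.span {∑ i, a i * v i} := by
  simp only [Ideal.span_singleton_le_span_singleton] at h ⊢
  exact sum_mul_dvd_sum_mul ha h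

theorem stmt_14_general (ha : OrthogonalIdempotents a) {x b : ι → A}
    (hb : ∀ i, IsIdempotentElem (b i))
    (hbx : ∀ i, Ideal.span {b i} = Ideal.span {x i}) :
    IsIdempotentElem (∑ i, a i * b i) ∧
      Ideal.span {∑ i, a i * b i} = Ideal.span {∑ i, a i * x i} :=
  ⟨isIdempotentElem_sum_mul ha hb,
    le_antisymm (span_singleton_sum_mul_le ha fun i ↦ (hbx i).le)
      (span_singleton_sum_mul_le ha fun i ↦ (hbx i).ge)⟩

end OrthogonalIdempotents

theorem IsCFOI.orthogonalIdempotents {A : Type*} [CommRing A] {n : ℕ} {a : Fin n → A}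
    (ha : IsCFOI a) : OrthogonalIdempotents a :=
  ⟨ha.1, ha.2.1⟩

theorem stmt_14 (A : Type*) [CommRing A]
    (hreg : ∀ a : A, ∃ b : A, a = a ^ 2 * b)
    (n : ℕ) (a : Fin n → A) (ha : IsCFOI a) (x b : Fin n → A)
    (hb : ∀ i, IsIdempotentElem (b i))
    (hbx : ∀ i, Ideal.span {b i} = Ideal.span {x i}) :
    IsIdempotentElem (∑ i, a i * b i) ∧
      Ideal.span {∑ i, a i * b i} = Ideal.span {∑ i, a i * x i} :=
  stmt_14_general ha.orthogonalIdempotents hb hbx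
end

section
/- Let A be a nontrivial commutative reduced ring such that A/p is finite for every prime ideal p of A. Then the characteristic of A is a nonzero squarefree integer, i.e., char(A) = q₁⋯qₙ for distinct prime numbers q₁,…,qₙ. -/
/-!
If `A` has characteristic zero, the zero ideal of `ℕ` is the contraction of the zero ideal of `A`,
hence also of a minimal prime `p` of `A`, and then `A ⧸ p` has characteristic zero.
If `A` is reduced and its characteristic `c` divides `y ^ k`, then `y ^ k`, hence `y`, vanishes in
`A`, so `c` divides `y`; a nonzero `c` with this property is squarefree.
-/

theorem exists_mem_minimalPrimes_charZero_quotient (A : Type*) [CommRing A] [CharZero A] :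
    ∃ p ∈ minimalPrimes A, CharZero (A ⧸ p) := by
  have comap_bot : (⊥ : Ideal A).comap (Nat.castRingHom A) = ⊥ :=
    Ideal.comap_bot_of_injective _ Nat.cast_injective
  obtain ⟨p, hp, comap_p⟩ : ∃ p ∈ minimalPrimes A, p.comap (Nat.castRingHom A) = ⊥ :=
    Ideal.exists_minimalPrimes_comap_eq _ _ <| by
      rw [comap_bot, Ideal.minimalPrimes_eq_subsingleton_self]
      exact Set.mem_singleton ⊥
  have : CharP (A ⧸ p) 0 :=
    (CharP.quotient_iff_le_ker_natCast 0 p).mpr (comap_p ▸ bot_le)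
  exact ⟨p, hp, CharP.charP_to_charZero _⟩

theorem ringChar_ne_zero_of_forall_minimalPrimes {A : Type*} [CommRing A]
    (hchar : ∀ p ∈ minimalPrimes A, ringChar (A ⧸ p) ≠ 0) : ringChar A ≠ 0 := by
  intro hA
  have : CharZero A := (CharP.ringChar_zero_iff_CharZero A).mp hA
  obtain ⟨p, hp, hp₀⟩ := exists_mem_minimalPrimes_charZero_quotient A
  exact hchar p hp ((CharP.ringChar_zero_iff_CharZero _).mpr hp₀)

theorem isRadical_ringChar (R : Type*) [Semiring R] [IsReduced R] : IsRadical (ringChar R) := by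
  intro k y hy
  rw [← ringChar.spec, Nat.cast_pow] at hy
  exact (ringChar.spec R y).mp (eq_zero_of_pow_eq_zero hy)

theorem exists_fin_prod_primes_of_squarefree {m : ℕ} (hm : Squarefree m) :
    ∃ (n : ℕ) (q : Fin n → ℕ),
      (∀ i, (q i).Prime) ∧ Function.Injective q ∧ m = ∏ i, q i := by
  let e := m.primeFactors.equivFin.symm
  refine ⟨_, fun i => e i, fun i => Nat.prime_of_mem_primeFactors (e i).2,
    Subtype.val_injective.comp e.injective, ?_⟩
  calc
    m = ∏ p ∈ m.primeFactors, p := (Nat.prod_primeFactors_of_squarefree hm).symm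
    _ = ∏ p : m.primeFactors, (p : ℕ) := (Finset.prod_coe_sort _ _).symm
    _ = ∏ i, (e i : ℕ) := (e.prod_comp _).symm

theorem stmt_16_general (A : Type*) [CommRing A] [IsReduced A]
    (hchar : ∀ p ∈ minimalPrimes A, ringChar (A ⧸ p) ≠ 0) :
    ringChar A ≠ 0 ∧ ∃ (n : ℕ) (q : Fin n → ℕ),
      (∀ i, (q i).Prime) ∧ Function.Injective q ∧ ringChar A = ∏ i, q i := by
  have ne_zero : ringChar A ≠ 0 := ringChar_ne_zero_of_forall_minimalPrimes hchar
  have squarefree : Squarefree (ringChar A) := (isRadical_ringChar A).squarefree ne_zero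
  exact ⟨ne_zero, exists_fin_prod_primes_of_squarefree squarefree⟩

theorem stmt_16 (A : Type*) [CommRing A] [IsReduced A] [Nontrivial A]
    (hfin : ∀ (p : Ideal A), p.IsPrime → Finite (A ⧸ p)) :
    ringChar A ≠ 0 ∧ ∃ (n : ℕ) (q : Fin n → ℕ),
      (∀ i, (q i).Prime) ∧ Function.Injective q ∧ ringChar A = ∏ i, q i :=
  stmt_16_general A fun p hp =>
    have := hfin p hp.isPrime
    CharP.ringChar_ne_zero_of_finite (A ⧸ p)
end

section
/- Let K be the field with four elements and let A be the subring of the product ring K^ℕ consisting of all sequences x such that the set {n ∈ ℕ : x(n) ∉ {0,1}} is finite. Then A is von Neumann regular, and for every prime ideal p of A the quotient A/p is finite with |A/p| ≤ 4. -/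
/-!
By Fermat's little theorem for the finite field `K`, of cardinality `q` say, every element of a
subring `A` of a power of `K` satisfies `a ^ q = a`. Hence `a = a ^ 2 * a ^ (q - 2)`, and in a
quotient of `A` that is a domain every element is a root of `X ^ q - X`, which has at most `q`
roots.
-/

open Polynomial

section Roots

variable {R : Type*} [CommRing R] [IsDomain R] {f : R[X]}

theorem finite_of_forall_isRoot (hf : f ≠ 0) (hroot : ∀ x, f.IsRoot x) : Finite R :=
  Set.finite_univ_iff.mp <| (finite_setOfPred_isRoot hf).subset fun x _ => hroot x

theorem card_le_natDegree_of_forall_isRoot (hf : f ≠ 0) (hroot : ∀ x, f.IsRoot x) :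
    Nat.card R ≤ f.natDegree := by
  have : Finite R := finite_of_forall_isRoot hf hroot
  have := Fintype.ofFinite R
  rw [Nat.card_eq_fintype_card]
  exact card_le_degree_of_subset_roots (Z := Finset.univ) fun x _ => (mem_roots hf).mpr (hroot x)

end Roots

theorem natDegree_X_pow_sub_X {R : Type*} [Ring R] [Nontrivial R] {n : ℕ} (hn : 1 < n) :
    (X ^ n - X : R[X]).natDegree = n := by
  rw [natDegree_sub_eq_left_of_natDegree_lt, natDegree_X_pow]
  rwa [natDegree_X, natDegree_X_pow]

theorem eq_sq_mul_pow_sub_two {M : Type*} [Monoid M] {n : ℕ} (hn : 1 < n) {a : M}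
    (ha : a ^ n = a) : a = a ^ 2 * a ^ (n - 2) := by
  rw [pow_mul_pow_sub a hn, ha]

theorem finite_and_card_le_of_forall_pow_eq_self {R : Type*} [CommRing R] [IsDomain R] {n : ℕ}
    (hn : 1 < n) (hpow : ∀ a : R, a ^ n = a) : Finite R ∧ Nat.card R ≤ n := by
  have hdeg : (X ^ n - X : R[X]).natDegree = n := natDegree_X_pow_sub_X hn
  have hne : (X ^ n - X : R[X]) ≠ 0 := ne_zero_of_natDegree_gt (hn.trans_eq hdeg.symm)
  have hroot (a : R) : (X ^ n - X : R[X]).IsRoot a := by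
    simp [hpow a]
  exact ⟨finite_of_forall_isRoot hne hroot,
    (card_le_natDegree_of_forall_isRoot hne hroot).trans_eq hdeg⟩

theorem quotient_pow_eq_self {R : Type*} [Ring R] {n : ℕ} (hpow : ∀ a : R, a ^ n = a)
    (I : Ideal R) [I.IsTwoSided] (x : R ⧸ I) : x ^ n = x := by
  obtain ⟨a, rfl⟩ := Ideal.Quotient.mk_surjective x
  rw [← map_pow, hpow]

theorem subring_pi_pow_card {ι K : Type*} [Field K] [Fintype K] (A : Subring (ι → K)) (a : A) :
    a ^ Fintype.card K = a :=
  Subtype.ext <| funext fun i => FiniteField.pow_card ((a : ι → K) i)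

theorem stmt_18_general {ι K : Type*} [Field K] [Fintype K] (A : Subring (ι → K)) :
    (∀ a : A, ∃ b : A, a = a ^ 2 * b) ∧
      ∀ (p : Ideal A), p.IsPrime → Finite (A ⧸ p) ∧ Nat.card (A ⧸ p) ≤ Fintype.card K := by
  have hcard : 1 < Fintype.card K := Fintype.one_lt_card
  have hpow : ∀ a : A, a ^ Fintype.card K = a := subring_pi_pow_card A
  refine ⟨fun a => ⟨_, eq_sq_mul_pow_sub_two hcard (hpow a)⟩, fun p _ => ?_⟩
  exact finite_and_card_le_of_forall_pow_eq_self hcard (quotient_pow_eq_self hpow p)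

theorem stmt_18 (K : Type*) [Field K] [Fintype K] (hK : Fintype.card K = 4)
    (A : Subring (ℕ → K))
    (hA : (A : Set (ℕ → K)) = {x | {n : ℕ | x n ∉ ({0, 1} : Set K)}.Finite}) :
    (∀ a : A, ∃ b : A, a = a ^ 2 * b) ∧
      ∀ (p : Ideal A), p.IsPrime → Finite (A ⧸ p) ∧ Nat.card (A ⧸ p) ≤ 4 :=
  hK ▸ stmt_18_general A
end

section
/- Let K be the field with four elements, fix a ∈ K with a ∉ {0,1}, and let A be the subring of the product ring K^ℕ consisting of all sequences x such that the set {n ∈ ℕ : x(n) ∉ {0,1}} is finite. Define f pointwise by f(x)(n) = x(n)·(x(n)+1)·(x(n)+a). Then f maps A into A, f satisfies f(x) − f(y) ∈ (x−y)A for all x, y ∈ A (i.e., f is contractive), but there is no polynomial F ∈ A[X] with F(x) = f(x) for all x ∈ A. -/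
/-!
Let `φ` be an endomorphism of a field `K` with fixed field `k`, and let `φ a ≠ a`. The function
`g t = (φ t - t) * (t - a)` vanishes on `k`; in particular it maps `k` into itself, so its
difference quotients at points of `k` lie in `k`, and `g` acts contractively on sequences with
almost all entries in `k`. Any polynomial over the ring of these sequences has, at some coordinate,
all its coefficients in `k`, so if it induced `g`, then `g` would be a polynomial function over `k`
and hence commute with `φ`. But `g a = 0`, while `g (φ a) = φ (φ a - a) * (φ a - a) ≠ 0`. For the
Frobenius endomorphism in characteristic two, `k = {0, 1}` and `g t = t * (t + 1) * (t + a)`.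
-/

open Filter Polynomial

section Maps

variable {R : Type*} [CommRing R]

/-- Contractive maps: `f x - f y` is always a multiple of `x - y`. -/
def IsContractive (f : R → R) : Prop :=
  ∀ x y, f x - f y ∈ Ideal.span {x - y}

/-- Polynomial maps: self-maps of `R` induced by a polynomial with coefficients in `R`. -/
def IsPolynomialMap (f : R → R) : Prop :=
  ∃ F : R[X], ∀ x, F.eval x = f x

end Maps

/-- The ring of families in `R` that lie in the subring `S` eventually along the filter `l`. For
`l = cofinite` these are the families with all but finitely many entries in `S`. -/
def eventuallySubring {ι R : Type*} [Ring R] (l : Filter ι) (S : Subring R) :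
    Subring (ι → R) where
  carrier := {x | ∀ᶠ i in l, x i ∈ S}
  mul_mem' hx hy := by filter_upwards [hx, hy] with i using S.mul_mem
  one_mem' := .of_forall fun _ ↦ S.one_mem
  add_mem' hx hy := by filter_upwards [hx, hy] with i using S.add_mem
  zero_mem' := .of_forall fun _ ↦ S.zero_mem
  neg_mem' hx := by filter_upwards [hx] with i using S.neg_mem

namespace eventuallySubring

section CommRing

variable {ι R : Type*} [CommRing R] {l : Filter ι} {S : Subring R}

theorem single_mem [DecidableEq ι] (hl : l ≤ cofinite) (i : ι) (t : R) :
    Pi.single i t ∈ eventuallySubring l S := by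
  filter_upwards [hl (Set.finite_singleton i).compl_mem_cofinite] with j hj
  simpa only [Pi.single_eq_of_ne hj] using S.zero_mem

variable (l) in
/-- The map induced on `eventuallySubring l S` by applying `g` to every entry. -/
def map (g : R → R) (hg : Set.MapsTo g S S) : eventuallySubring l S → eventuallySubring l S :=
  Subtype.map (g ∘ ·) fun _ hx ↦ hx.mono fun _ hi ↦ hg hi

@[simp]
theorem map_apply (g : R → R) (hg : Set.MapsTo g S S) (x : eventuallySubring l S) (i : ι) :
    (map l g hg x : ι → R) i = g ((x : ι → R) i) :=
  rfl

theorem eventually_coeff_mem (F : (eventuallySubring l S)[X]) :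
    ∀ᶠ i in l, ∀ n, (F.coeff n : ι → R) i ∈ S := by
  have hsupport : ∀ᶠ i in l, ∀ n ∈ F.support, (F.coeff n : ι → R) i ∈ S :=
    (eventually_all_finset F.support).2 fun n _ ↦ (F.coeff n).2
  filter_upwards [hsupport] with i hi n
  by_cases hn : n ∈ F.support
  · exact hi n hn
  · rw [notMem_support_iff.1 hn]
    exact S.zero_mem

theorem exists_eval₂_eq_of_isPolynomialMap_map [l.NeBot] (hl : l ≤ cofinite) {g : R → R}
    {hg : Set.MapsTo g S S} (h : IsPolynomialMap (map l g hg)) :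
    ∃ G : S[X], ∀ t, G.eval₂ S.subtype t = g t := by
  classical
  obtain ⟨F, hF⟩ := h
  obtain ⟨i, hi⟩ := (eventually_coeff_mem F).exists
  let ev : eventuallySubring l S →+* R := (Pi.evalRingHom (fun _ ↦ R) i).comp (Subring.subtype _)
  have hlifts : F.map ev ∈ lifts S.subtype :=
    (lifts_iff_coeff_lifts _).2 fun n ↦ ⟨⟨_, hi n⟩, (coeff_map ev n).symm⟩
  obtain ⟨G, hG⟩ := (mem_lifts _).1 hlifts
  refine ⟨G, fun t ↦ ?_⟩
  let x : eventuallySubring l S := ⟨Pi.single i t, single_mem hl i t⟩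
  have hx : ev x = t := Pi.single_eq_same (M := fun _ ↦ R) i t
  calc G.eval₂ S.subtype t = (F.map ev).eval (ev x) := by rw [← eval_map, hG, hx]
    _ = ev (F.eval x) := eval_map_apply ..
    _ = g (ev x) := congrArg ev (hF x)
    _ = g t := by rw [hx]

end CommRing

theorem isContractive_map {ι K : Type*} [Field K] {l : Filter ι} {k : Subfield K} {g : K → K}
    (hg : Set.MapsTo g k k) : IsContractive (map (S := k.toSubring) l g hg) := by
  intro x y
  let q : ι → K := fun i ↦ (g (x.1 i) - g (y.1 i)) / (x.1 i - y.1 i)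
  have hq : q ∈ eventuallySubring l k.toSubring := by
    filter_upwards [x.2, y.2] with i hx hy
    exact k.div_mem (k.sub_mem (hg hx) (hg hy)) (k.sub_mem hx hy)
  refine Ideal.mem_span_singleton'.2 ⟨⟨q, hq⟩, Subtype.ext <| funext fun i ↦ ?_⟩
  have hzero : x.1 i - y.1 i = 0 → g (x.1 i) - g (y.1 i) = 0 := fun h ↦ by
    rw [sub_eq_zero.1 h, sub_self]
  exact div_mul_cancel_of_imp hzero

end eventuallySubring

theorem eval₂_subtype_map_of_fixed {R : Type*} [CommRing R] {S : Subring R} {φ : R →+* R}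
    (hφ : ∀ c ∈ S, φ c = c) (G : S[X]) (t : R) :
    G.eval₂ S.subtype (φ t) = φ (G.eval₂ S.subtype t) := by
  have hcomp : φ.comp S.subtype = S.subtype := RingHom.ext fun c ↦ hφ c c.2
  rw [hom_eval₂, hcomp]

theorem stmt_19_general {ι K : Type*} [Field K] {l : Filter ι} [l.NeBot] (hl : l ≤ cofinite)
    (φ : K →+* K) {a : K} (ha : φ a ≠ a) (A : Subring (ι → K))
    (hA : ∀ x, x ∈ A ↔ ∀ᶠ i in l, φ (x i) = x i) :
    ∃ f : A → A,
      (∀ (x : A) (i : ι),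
        (f x : ι → K) i = (φ ((x : ι → K) i) - (x : ι → K) i) * ((x : ι → K) i - a)) ∧
      IsContractive f ∧ ¬ IsPolynomialMap f := by
  let k : Subfield K := φ.eqLocusField (RingHom.id K)
  obtain rfl : A = eventuallySubring l k.toSubring := Subring.ext hA
  let g : K → K := fun t ↦ (φ t - t) * (t - a)
  have hg : Set.MapsTo g k k := fun t (ht : φ t = t) ↦ by
    simpa only [g, ht, sub_self, zero_mul, SetLike.mem_coe] using k.zero_mem
  refine ⟨eventuallySubring.map l g hg, eventuallySubring.map_apply g hg,
    eventuallySubring.isContractive_map hg, fun hpoly ↦ ?_⟩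
  obtain ⟨G, hG⟩ := eventuallySubring.exists_eval₂_eq_of_isPolynomialMap_map hl hpoly
  have hcomm : g (φ a) = φ (g a) := by
    simpa only [← hG] using eval₂_subtype_map_of_fixed (fun _ hc ↦ hc) G a
  have hprod : φ (φ a - a) * (φ a - a) = 0 := by
    simpa only [g, sub_self, mul_zero, map_zero, map_sub] using hcomm
  have hne : φ a - a ≠ 0 := sub_ne_zero.2 ha
  exact mul_ne_zero ((map_ne_zero φ).2 hne) hne hprod

theorem frobenius_two_eq_self_iff {R : Type*} [CommRing R] [IsDomain R] [CharP R 2] {t : R} :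
    frobenius R 2 t = t ↔ t ∈ ({0, 1} : Set R) := by
  rw [frobenius_def, sq]
  exact IsIdempotentElem.iff_eq_zero_or_one

theorem frobenius_two_sub_mul_sub {R : Type*} [CommRing R] [CharP R 2] (t a : R) :
    (frobenius R 2 t - t) * (t - a) = t * (t + 1) * (t + a) := by
  rw [frobenius_def, CharTwo.sub_eq_add, CharTwo.sub_eq_add]
  ring

theorem stmt_19 (K : Type*) [Field K] [Fintype K] (hK : Fintype.card K = 4)
    (a : K) (ha : a ∉ ({0, 1} : Set K))
    (A : Subring (ℕ → K))
    (hA : (A : Set (ℕ → K)) = {x | {n : ℕ | x n ∉ ({0, 1} : Set K)}.Finite}) :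
    ∃ f : A → A,
      (∀ (x : A) (n : ℕ),
        (f x : ℕ → K) n = (x : ℕ → K) n * ((x : ℕ → K) n + 1) * ((x : ℕ → K) n + a)) ∧
      (∀ x y : A, f x - f y ∈ Ideal.span {x - y}) ∧
      ¬ ∃ F : Polynomial A, ∀ x : A, F.eval x = f x := by
  have : CharP K 2 := charP_of_card_eq_prime_pow (f := 2) hK
  simpa only [frobenius_two_sub_mul_sub, IsContractive, IsPolynomialMap] using
    stmt_19_general le_rfl (frobenius K 2) (mt frobenius_two_eq_self_iff.1 ha) A fun x ↦ by
      simpa only [frobenius_two_eq_self_iff] using! Set.ext_iff.1 hA x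
end
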